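/- Let n ≥ 2 and 1 < m < n. There exists a constant C > 0 such that for all ζ ∈ ℂ∖ℝ and all Schwartz functions f, g on ℝⁿ, |( (ζ − p(D_x))^{-1} f , g )_{L²(ℝⁿ)}| ≤ C ‖⟨x⟩^{m/2} f‖_{L²(ℝⁿ)} ‖⟨x⟩^{m/2} g‖_{L²(ℝⁿ)}; in particular the supremum over ζ ∈ ℂ∖ℝ of the left-hand side is finite and bounded by the right-hand side. -/

import Mathlib

open MeasureTheory Real Complex RealInnerProductSpace

noncomputable section

/-- Fourier transform with convention `(2π)^(-n/2) ∫ e^(-ix·ξ) f(x) dx`. -/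
def FT (n : ℕ) (f : EuclideanSpace ℝ (Fin n) → ℂ) (ξ : EuclideanSpace ℝ (Fin n)) : ℂ :=
  ((2 * π) ^ (-(n : ℝ) / 2) : ℝ) •
    ∫ x : EuclideanSpace ℝ (Fin n), Complex.exp (-Complex.I * ((⟪x, ξ⟫ : ℝ) : ℂ)) * f x

/-- Inverse Fourier transform. -/
def IFT (n : ℕ) (F : EuclideanSpace ℝ (Fin n) → ℂ) (x : EuclideanSpace ℝ (Fin n)) : ℂ :=
  ((2 * π) ^ (-(n : ℝ) / 2) : ℝ) •
    ∫ ξ : EuclideanSpace ℝ (Fin n), Complex.exp (Complex.I * ((⟪x, ξ⟫ : ℝ) : ℂ)) * F ξ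

/-- Fourier multiplier with symbol `q`: `q(D_x) f = IFT (q · FT f)`. -/
def mult (n : ℕ) (q : EuclideanSpace ℝ (Fin n) → ℂ) (f : EuclideanSpace ℝ (Fin n) → ℂ) :
    EuclideanSpace ℝ (Fin n) → ℂ :=
  IFT n fun ξ => q ξ * FT n f ξ

section Preliminaries

open SchwartzMap FourierTransform Set
open scoped ENNReal NNReal

variable {V : Type*} [NormedAddCommGroup V] [InnerProductSpace ℝ V] [FiniteDimensional ℝ V]

theorem exists_schwartz_split (f : 𝓢(V, ℂ)) {R : ℝ} (hR : 0 < R) :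
    ∃ f₁ f₂ : 𝓢(V, ℂ), f = f₁ + f₂ ∧ (∀ x, ‖f₁ x‖ ≤ ‖f x‖) ∧ (∀ x, 2 * R ≤ ‖x‖ → f₁ x = 0) ∧
      (∀ x, ‖f₂ x‖ ≤ ‖f x‖) ∧ (∀ x, ‖x‖ ≤ R → f₂ x = 0) := by
  let φ : ContDiffBump (0 : V) := ⟨R, 2 * R, hR, by linarith⟩
  have hsm : ContDiff ℝ (⊤ : ℕ∞) (fun x => (φ x : ℂ) * f x) :=
    (Complex.ofRealCLM.contDiff.comp φ.contDiff).mul (f.smooth _)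
  have hcs : HasCompactSupport (fun x => (φ x : ℂ) * f x) := by
    refine HasCompactSupport.mul_right ?_
    exact φ.hasCompactSupport.comp_left (g := fun t : ℝ => (t : ℂ)) (by simp)
  let f₁ : 𝓢(V, ℂ) := hcs.toSchwartzMap hsm
  have h1 : ∀ x, f₁ x = (φ x : ℂ) * f x := fun x => rfl
  refine ⟨f₁, f - f₁, by abel, fun x => ?_, fun x hx => ?_, fun x => ?_, fun x hx => ?_⟩
  · rw [h1, norm_mul, Complex.norm_real, Real.norm_of_nonneg φ.nonneg]
    exact mul_le_of_le_one_left (norm_nonneg _) φ.le_one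
  · rw [h1, φ.zero_of_le_dist (by simpa using hx)]; simp
  · have : (f - f₁) x = ((1 - φ x : ℝ) : ℂ) * f x := by
      rw [sub_apply, h1]; push_cast; ring
    rw [this, norm_mul, Complex.norm_real, Real.norm_of_nonneg (by linarith [φ.le_one (x := x)])]
    exact mul_le_of_le_one_left (norm_nonneg _) (by linarith [φ.nonneg (x := x)])
  · rw [sub_apply, h1, φ.one_of_mem_closedBall (by simpa using hx)]; simp

variable [MeasurableSpace V] [BorelSpace V]

theorem lintegral_mul_setLIntegral_swap {α β : Type*} [MeasurableSpace α] [MeasurableSpace β]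
    (ν : Measure β) [SFinite ν] (μ : Measure α) [SFinite μ] {k : β → ℝ≥0∞} {h : α → ℝ≥0∞}
    (hk : Measurable k) (hh : Measurable h) {S : Set (β × α)} (hS : MeasurableSet S) :
    ∫⁻ t, k t * ∫⁻ x in {x | (t, x) ∈ S}, h x ∂μ ∂ν =
      ∫⁻ x, (∫⁻ t in {t | (t, x) ∈ S}, k t ∂ν) * h x ∂μ := by
  have h1 : ∀ t, k t * ∫⁻ x in {x | (t, x) ∈ S}, h x ∂μ =
      ∫⁻ x, S.indicator (fun p => k p.1 * h p.2) (t, x) ∂μ := by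
    intro t
    have hm : MeasurableSet {x | (t, x) ∈ S} := measurable_prodMk_left hS
    rw [← lintegral_const_mul _ hh, ← lintegral_indicator hm]
    rfl
  have h2 : ∀ x, (∫⁻ t in {t | (t, x) ∈ S}, k t ∂ν) * h x =
      ∫⁻ t, S.indicator (fun p => k p.1 * h p.2) (t, x) ∂ν := by
    intro x
    have hm : MeasurableSet {t | (t, x) ∈ S} := measurable_prodMk_right hS
    rw [← lintegral_mul_const _ hk, ← lintegral_indicator hm]
    rfl
  simp_rw [h1, h2]
  refine lintegral_lintegral_swap (f := fun t x => S.indicator (fun p => k p.1 * h p.2) (t, x)) ?_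
  exact (Measurable.indicator (by fun_prop) hS).aemeasurable

theorem measurable_setLIntegral_section {α β : Type*} [MeasurableSpace α] [MeasurableSpace β]
    (μ : Measure α) [SFinite μ] {h : α → ℝ≥0∞} (hh : Measurable h) {S : Set (β × α)}
    (hS : MeasurableSet S) : Measurable fun t => ∫⁻ x in {x | (t, x) ∈ S}, h x ∂μ := by
  have h1 : ∀ t, ∫⁻ x in {x | (t, x) ∈ S}, h x ∂μ =
      ∫⁻ x, S.indicator (fun p => h p.2) (t, x) ∂μ := by
    intro t
    have hm : MeasurableSet {x | (t, x) ∈ S} := measurable_prodMk_left hS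
    rw [← lintegral_indicator hm]
    rfl
  simp_rw [h1]
  exact Measurable.lintegral_prod_right' (f := S.indicator fun p : β × α => h p.2)
    (Measurable.indicator (by fun_prop) hS)

theorem lintegral_Ioi_rpow_neg {s w : ℝ} (hs : 0 < s) (hw : 0 < w) :
    ∫⁻ t in Ioi w, ENNReal.ofReal (t ^ (-s - 1)) = ENNReal.ofReal (w ^ (-s) / s) := by
  rw [← ofReal_integral_eq_lintegral_ofReal
    (integrableOn_Ioi_rpow_of_lt (by linarith) hw), integral_Ioi_rpow_of_lt (by linarith) hw]
  · congr 1
    rw [show -s - 1 + 1 = -s by ring]; field_simp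
  · filter_upwards [ae_restrict_mem measurableSet_Ioi] with t ht
    exact rpow_nonneg (hw.trans ht).le _

theorem lintegral_Ioc_rpow {s w : ℝ} (hs : 0 < s) (hw : 0 ≤ w) :
    ∫⁻ t in Ioc 0 w, ENNReal.ofReal (t ^ (s - 1)) = ENNReal.ofReal (w ^ s / s) := by
  have hi : IntervalIntegrable (fun t : ℝ => t ^ (s - 1)) volume 0 w :=
    intervalIntegral.intervalIntegrable_rpow' (by linarith)
  rw [← ofReal_integral_eq_lintegral_ofReal hi.1, ← intervalIntegral.integral_of_le hw,
    integral_rpow (Or.inl (by linarith))]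
  · congr 1
    rw [show s - 1 + 1 = s by ring, zero_rpow hs.ne']; simp
  · filter_upwards [ae_restrict_mem measurableSet_Ioc] with t ht
    exact rpow_nonneg ht.1.le _

theorem lintegral_enorm_sq_fourier (f : 𝓢(V, ℂ)) :
    ∫⁻ ξ, ‖𝓕 f ξ‖ₑ ^ 2 = ∫⁻ x, ‖f x‖ₑ ^ 2 := by
  have key : ∀ g : 𝓢(V, ℂ), ∫⁻ ξ, ‖g ξ‖ₑ ^ 2 = ENNReal.ofReal (∫ x, ‖g x‖ ^ 2) := by
    intro g
    have hi : Integrable (fun x => ‖g x‖ ^ 2) := by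
      have := (g.memLp 2 (μ := volume)).integrable_norm_pow (by norm_num)
      simpa using this
    rw [ofReal_integral_eq_lintegral_ofReal hi (ae_of_all _ fun x => by positivity)]
    refine lintegral_congr fun x => ?_
    rw [ENNReal.ofReal_pow (norm_nonneg _), ofReal_norm]
  rw [key, key, integral_norm_sq_fourier]

theorem enorm_fourier_le (f : 𝓢(V, ℂ)) (ξ : V) : ‖𝓕 f ξ‖ₑ ≤ ∫⁻ x, ‖f x‖ₑ := by
  rw [fourier_coe, Real.fourier_eq]
  refine (enorm_integral_le_lintegral_enorm _).trans (le_of_eq ?_)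
  refine lintegral_congr fun x => ?_
  rw [← ofReal_norm, ← ofReal_norm, Circle.norm_smul]

theorem sq_lintegral_mul_le {α : Type*} [MeasurableSpace α] (μ : Measure α) {u v : α → ℝ≥0∞}
    (hu : AEMeasurable u μ) (hv : AEMeasurable v μ) :
    (∫⁻ x, u x * v x ∂μ) ^ 2 ≤ (∫⁻ x, u x ^ 2 ∂μ) * ∫⁻ x, v x ^ 2 ∂μ := by
  have := ENNReal.lintegral_mul_le_Lp_mul_Lq μ Real.HolderConjugate.two_two hu hv
  calc _ ≤ _ := pow_le_pow_left' this 2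
    _ = _ := by
      rw [mul_pow, ← ENNReal.rpow_natCast, ← ENNReal.rpow_natCast, ← ENNReal.rpow_mul,
        ← ENNReal.rpow_mul]
      simp

end Preliminaries

section Polar

open SchwartzMap FourierTransform Set
open scoped ENNReal NNReal

variable {V : Type*} [NormedAddCommGroup V] [InnerProductSpace ℝ V] [FiniteDimensional ℝ V]
  [MeasurableSpace V] [BorelSpace V]

local notation "σ" => Measure.toSphere (volume : Measure V)
local notation "dim" => Module.finrank ℝ V

theorem lintegral_polar [Nontrivial V] {H : V → ℝ≥0∞} (hH : Measurable H) :
    ∫⁻ ξ, H ξ = ∫⁻ ω, (∫⁻ r in Ioi (0 : ℝ), ENNReal.ofReal (r ^ (dim - 1)) * H (r • (ω : V))) ∂σ := by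
  have hm : Measurable fun p : Metric.sphere (0 : V) 1 × Ioi (0 : ℝ) => H ((p.2 : ℝ) • (p.1 : V)) :=
    hH.comp (Continuous.measurable (by fun_prop))
  calc ∫⁻ ξ, H ξ = ∫⁻ x : ({(0)}ᶜ : Set V), H x ∂((volume : Measure V).comap (↑)) := by
        rw [lintegral_subtype_comap (measurableSet_singleton _).compl, restrict_compl_singleton]
    _ = ∫⁻ p, H ((p.2 : ℝ) • (p.1 : V)) ∂(Measure.prod σ (.volumeIoiPow (dim - 1))) := by
        rw [← (volume : Measure V).measurePreserving_homeomorphUnitSphereProd.lintegral_comp hm]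
        refine lintegral_congr fun x => ?_
        have hx : (x : V) ≠ 0 := x.2
        simp [smul_smul, hx]
    _ = ∫⁻ ω, ∫⁻ r : Ioi (0 : ℝ), H ((r : ℝ) • (ω : V)) ∂(.volumeIoiPow (dim - 1)) ∂σ :=
        lintegral_prod _ hm.aemeasurable
    _ = _ := by
        refine lintegral_congr fun ω => ?_
        have hω : Measurable fun r : Ioi (0 : ℝ) => H ((r : ℝ) • (ω : V)) :=
          hH.comp (Continuous.measurable (by fun_prop))
        rw [Measure.volumeIoiPow, lintegral_withDensity_eq_lintegral_mul _ (by fun_prop) hω]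
        rw [← lintegral_subtype_comap measurableSet_Ioi
          (fun r : ℝ => ENNReal.ofReal (r ^ (dim - 1)) * H (r • (ω : V)))]
        rfl

theorem integral_polar [Nontrivial V] {H : V → ℂ} (hH : Integrable H) :
    ∫ ξ, H ξ = ∫ ω, (∫ r in Ioi (0 : ℝ), (r ^ (dim - 1) : ℝ) • H (r • (ω : V))) ∂σ := by
  have hcomp : ∀ x : ({(0)}ᶜ : Set V), H ((((homeomorphUnitSphereProd V) x).2 : ℝ) •
      (((homeomorphUnitSphereProd V) x).1 : V)) = H x := by
    intro x
    have hx : (x : V) ≠ 0 := x.2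
    simp [smul_smul, hx]
  have hi : Integrable (fun p : Metric.sphere (0 : V) 1 × Ioi (0 : ℝ) => H ((p.2 : ℝ) • (p.1 : V)))
      (Measure.prod σ (.volumeIoiPow (dim - 1))) := by
    rw [← (volume : Measure V).measurePreserving_homeomorphUnitSphereProd.integrable_comp_emb
      (Homeomorph.measurableEmbedding _)]
    simp only [Function.comp_def, hcomp]
    rw [← Function.comp_def H, ← integrableOn_iff_comap_subtypeVal (measurableSet_singleton _).compl]
    exact hH.integrableOn
  calc ∫ ξ, H ξ = ∫ x : ({(0)}ᶜ : Set V), H x ∂((volume : Measure V).comap (↑)) := by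
        rw [integral_subtype_comap (measurableSet_singleton _).compl, restrict_compl_singleton]
    _ = ∫ p, H ((p.2 : ℝ) • (p.1 : V)) ∂(Measure.prod σ (.volumeIoiPow (dim - 1))) := by
        rw [← (volume : Measure V).measurePreserving_homeomorphUnitSphereProd.integral_comp
          (Homeomorph.measurableEmbedding _)]
        simp only [hcomp]
    _ = ∫ ω, ∫ r : Ioi (0 : ℝ), H ((r : ℝ) • (ω : V)) ∂(.volumeIoiPow (dim - 1)) ∂σ :=
        integral_prod _ hi
    _ = _ := by
        refine integral_congr_ae (ae_of_all _ fun ω => ?_)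
        simp only [Measure.volumeIoiPow, ENNReal.ofReal]
        rw [integral_withDensity_eq_integral_smul (by fun_prop),
          ← integral_subtype_comap measurableSet_Ioi
          (fun r : ℝ => (r ^ (dim - 1) : ℝ) • H (r • (ω : V)))]
        refine integral_congr_ae (ae_of_all _ fun r => ?_)
        have : (0 : ℝ) ≤ (r : ℝ) ^ (dim - 1) := pow_nonneg r.2.out.le _
        simp [NNReal.smul_def, this]

theorem lintegral_ball_norm_rpow_neg [Nontrivial V] {b ρ : ℝ} (hb : b < dim) (hρ : 0 ≤ ρ) :
    ∫⁻ x in {x : V | ‖x‖ ≤ ρ}, ENNReal.ofReal (‖x‖ ^ (-b)) =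
      σ univ * ENNReal.ofReal (ρ ^ (dim - b) / (dim - b)) := by
  have hS : MeasurableSet {x : V | ‖x‖ ≤ ρ} := measurableSet_le (by fun_prop) (by fun_prop)
  have hd : 0 < dim := Module.finrank_pos
  rw [← lintegral_indicator hS, lintegral_polar (Measurable.indicator (by fun_prop) hS)]
  have : ∀ ω : Metric.sphere (0 : V) 1, ∫⁻ r in Ioi (0 : ℝ), ENNReal.ofReal (r ^ (dim - 1)) *
      {x : V | ‖x‖ ≤ ρ}.indicator (fun x => ENNReal.ofReal (‖x‖ ^ (-b))) (r • (ω : V)) =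
      ENNReal.ofReal (ρ ^ (dim - b) / (dim - b)) := by
    intro ω
    rw [← lintegral_Ioc_rpow (by linarith) hρ, ← Ioi_inter_Iic,
      ← Measure.restrict_restrict_of_subset (s := Ioi 0 ∩ Iic ρ) (t := Ioi 0) inter_subset_left,
      ← lintegral_indicator (measurableSet_Ioi.inter measurableSet_Iic)]
    refine setLIntegral_congr_fun measurableSet_Ioi fun r hr => ?_
    have hr : 0 < r := hr
    have hn : ‖r • (ω : V)‖ = r := by simp [norm_smul, hr.le]
    by_cases h : r ≤ ρ
    · rw [indicator_of_mem (by simpa [hn] using h), indicator_of_mem (show r ∈ Ioi 0 ∩ Iic ρ from ⟨hr, h⟩), hn,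
        ← ENNReal.ofReal_mul (by positivity), ← rpow_natCast, ← rpow_add hr]
      congr 2
      push_cast [Nat.cast_sub (Nat.one_le_of_lt hd)]; ring
    · rw [indicator_of_notMem (by simpa [hn] using h), indicator_of_notMem (fun h' => h h'.2)]
      simp
  simp_rw [this]
  rw [lintegral_const, mul_comm]

end Polar

section Pitt

open SchwartzMap FourierTransform Set
open scoped ENNReal NNReal

variable {V : Type*} [NormedAddCommGroup V] [InnerProductSpace ℝ V] [FiniteDimensional ℝ V]
  [MeasurableSpace V] [BorelSpace V]

local notation "σ" => Measure.toSphere (volume : Measure V)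
local notation "dim" => Module.finrank ℝ V

theorem sq_lintegral_enorm_le_of_support [Nontrivial V] {b ρ : ℝ} (hb : b < dim) (hρ : 0 ≤ ρ)
    {f : V → ℂ} (hf : Measurable f) (hsupp : ∀ x, ρ < ‖x‖ → f x = 0) :
    (∫⁻ x, ‖f x‖ₑ) ^ 2 ≤ σ univ * ENNReal.ofReal (ρ ^ (dim - b) / (dim - b)) *
      ∫⁻ x in {x : V | ‖x‖ ≤ ρ}, ENNReal.ofReal (‖x‖ ^ b) * ‖f x‖ₑ ^ 2 := by
  have hS : MeasurableSet {x : V | ‖x‖ ≤ ρ} := measurableSet_le (by fun_prop) (by fun_prop)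
  have h0 : ∀ᵐ x : V, x ≠ 0 := by simp [ae_iff]
  have h1 : ∫⁻ x, ‖f x‖ₑ = ∫⁻ x in {x : V | ‖x‖ ≤ ρ},
      ENNReal.ofReal (‖x‖ ^ (-b / 2)) * (ENNReal.ofReal (‖x‖ ^ (b / 2)) * ‖f x‖ₑ) := by
    rw [← lintegral_indicator hS]
    refine lintegral_congr_ae ?_
    filter_upwards [h0] with x hx
    have hx' : 0 < ‖x‖ := norm_pos_iff.2 hx
    by_cases h : ‖x‖ ≤ ρ
    · rw [indicator_of_mem (by exact h), ← mul_assoc, ← ENNReal.ofReal_mul (by positivity),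
        ← rpow_add hx', show -b / 2 + b / 2 = 0 by ring, rpow_zero]
      simp
    · rw [indicator_of_notMem (by exact h), hsupp x (not_le.1 h)]; simp
  rw [h1]
  refine (sq_lintegral_mul_le _ (by fun_prop) (by fun_prop)).trans (le_of_eq ?_)
  rw [← lintegral_ball_norm_rpow_neg hb hρ]
  congr 1
  · refine lintegral_congr fun x => ?_
    rw [← ENNReal.ofReal_pow (by positivity), ← rpow_natCast, ← rpow_mul (norm_nonneg _)]
    congr 2; push_cast; ring
  · refine lintegral_congr fun x => ?_
    rw [mul_pow, ← ENNReal.ofReal_pow (by positivity), ← rpow_natCast, ← rpow_mul (norm_nonneg _)]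
    congr 3; push_cast; ring

theorem enorm_add_sq_le (x y : ℂ) : ‖x + y‖ₑ ^ 2 ≤ 2 * ‖x‖ₑ ^ 2 + 2 * ‖y‖ₑ ^ 2 := by
  simp only [← ofReal_norm, ← ENNReal.ofReal_pow (norm_nonneg _)]
  rw [show (2 : ℝ≥0∞) = ENNReal.ofReal 2 by simp, ← ENNReal.ofReal_mul (by norm_num),
    ← ENNReal.ofReal_mul (by norm_num), ← ENNReal.ofReal_add (by positivity) (by positivity)]
  refine ENNReal.ofReal_le_ofReal ?_
  have := norm_add_le x y
  nlinarith [sq_nonneg (‖x‖ - ‖y‖), norm_nonneg (x + y), norm_nonneg x, norm_nonneg y]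

theorem fourier_add_apply (f g : 𝓢(V, ℂ)) (ξ : V) : 𝓕 (f + g) ξ = 𝓕 f ξ + 𝓕 g ξ := by
  rw [FourierTransform.fourier_add]; rfl

theorem setLIntegral_ball_fourier_le [Nontrivial V] {b : ℝ} (hb : b < dim) (f : 𝓢(V, ℂ)) {t : ℝ}
    (ht : 0 < t) :
    ∫⁻ ξ in {ξ : V | ‖ξ‖ < t}, ‖𝓕 f ξ‖ₑ ^ 2 ≤
      2 * (volume (Metric.ball (0 : V) 1) * (σ univ * ENNReal.ofReal (2 ^ (dim - b) / (dim - b)))) *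
        (ENNReal.ofReal (t ^ b) *
          ∫⁻ x in {x : V | ‖x‖ ≤ 2 / t}, ENNReal.ofReal (‖x‖ ^ b) * ‖f x‖ₑ ^ 2) +
      2 * ∫⁻ x in {x : V | 1 / t < ‖x‖}, ‖f x‖ₑ ^ 2 := by
  obtain ⟨f₁, f₂, rfl, h1, h1', h2, h2'⟩ := exists_schwartz_split f (R := 1 / t) (by positivity)
  set f := f₁ + f₂
  have hSt : MeasurableSet {ξ : V | ‖ξ‖ < t} := measurableSet_lt (by fun_prop) (by fun_prop)
  have hS1 : MeasurableSet {x : V | 1 / t < ‖x‖} := measurableSet_lt (by fun_prop) (by fun_prop)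
  have e1 : ∀ x, ‖f₁ x‖ₑ ≤ ‖f x‖ₑ := fun x => enorm_le_iff_norm_le.2 (h1 x)
  have e2 : ∀ x, ‖f₂ x‖ₑ ≤ ‖f x‖ₑ := fun x => enorm_le_iff_norm_le.2 (h2 x)
  have p2 : ∫⁻ ξ in {ξ : V | ‖ξ‖ < t}, ‖𝓕 f₂ ξ‖ₑ ^ 2 ≤
      ∫⁻ x in {x : V | 1 / t < ‖x‖}, ‖f x‖ₑ ^ 2 := by
    refine (setLIntegral_le_lintegral _ _).trans ?_
    rw [lintegral_enorm_sq_fourier, ← lintegral_indicator hS1]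
    refine lintegral_mono fun x => ?_
    by_cases h : 1 / t < ‖x‖
    · rw [indicator_of_mem (by exact h)]; gcongr; exact e2 x
    · rw [h2' x (not_lt.1 h)]; simp
  have hvol : volume {ξ : V | ‖ξ‖ < t} = ENNReal.ofReal (t ^ (dim : ℝ)) *
      volume (Metric.ball (0 : V) 1) := by
    rw [rpow_natCast, ← Measure.addHaar_ball volume (0 : V) ht.le]
    congr 1; ext; simp
  have p1 : ∫⁻ ξ in {ξ : V | ‖ξ‖ < t}, ‖𝓕 f₁ ξ‖ₑ ^ 2 ≤
      (volume (Metric.ball (0 : V) 1) * (σ univ * ENNReal.ofReal (2 ^ (dim - b) / (dim - b)))) *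
        (ENNReal.ofReal (t ^ b) *
          ∫⁻ x in {x : V | ‖x‖ ≤ 2 / t}, ENNReal.ofReal (‖x‖ ^ b) * ‖f x‖ₑ ^ 2) := by
    have hF : ∀ ξ, ‖𝓕 f₁ ξ‖ₑ ^ 2 ≤ σ univ * ENNReal.ofReal ((2 / t) ^ (dim - b) / (dim - b)) *
      ∫⁻ x in {x : V | ‖x‖ ≤ 2 / t}, ENNReal.ofReal (‖x‖ ^ b) * ‖f x‖ₑ ^ 2 := by
      intro ξ
      calc _ ≤ (∫⁻ x, ‖f₁ x‖ₑ) ^ 2 := by gcongr; exact enorm_fourier_le f₁ ξ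
        _ ≤ _ := sq_lintegral_enorm_le_of_support hb (ρ := 2 / t) (by positivity)
          f₁.continuous.measurable (fun x hx => h1' x (by rw [mul_one_div]; exact hx.le))
        _ ≤ _ := by gcongr with x; exact e1 x
    calc _ ≤ _ := lintegral_mono (μ := volume.restrict _) hF
      _ = _ := by
        rw [setLIntegral_const, hvol]
        have : ENNReal.ofReal ((2 / t) ^ (dim - b) / (dim - b)) * ENNReal.ofReal (t ^ (dim : ℝ)) =
          ENNReal.ofReal (2 ^ (dim - b) / (dim - b)) * ENNReal.ofReal (t ^ b) := by
          have : (0 : ℝ) < dim - b := by linarith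
          rw [← ENNReal.ofReal_mul (by positivity), ← ENNReal.ofReal_mul (by positivity)]
          congr 1
          rw [div_rpow (by norm_num) ht.le, rpow_sub ht]
          field_simp
        calc _ = σ univ * volume (Metric.ball (0 : V) 1) *
              (∫⁻ x in {x : V | ‖x‖ ≤ 2 / t}, ENNReal.ofReal (‖x‖ ^ b) * ‖f x‖ₑ ^ 2) *
              (ENNReal.ofReal ((2 / t) ^ (dim - b) / (dim - b)) * ENNReal.ofReal (t ^ (dim : ℝ))) := by
              ring
          _ = _ := by rw [this]; ring
  calc _ ≤ ∫⁻ ξ in {ξ : V | ‖ξ‖ < t}, (2 * ‖𝓕 f₁ ξ‖ₑ ^ 2 + 2 * ‖𝓕 f₂ ξ‖ₑ ^ 2) := by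
        refine lintegral_mono fun ξ => ?_
        simp only [f, fourier_add_apply]
        exact enorm_add_sq_le _ _
    _ = 2 * (∫⁻ ξ in {ξ : V | ‖ξ‖ < t}, ‖𝓕 f₁ ξ‖ₑ ^ 2) +
        2 * ∫⁻ ξ in {ξ : V | ‖ξ‖ < t}, ‖𝓕 f₂ ξ‖ₑ ^ 2 := by
        have m1 : Measurable fun ξ => ‖𝓕 f₁ ξ‖ₑ ^ 2 := by
          exact ((𝓕 f₁).continuous.measurable.enorm).pow_const 2
        have m2 : Measurable fun ξ => ‖𝓕 f₂ ξ‖ₑ ^ 2 := by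
          exact ((𝓕 f₂).continuous.measurable.enorm).pow_const 2
        rw [lintegral_add_left (by fun_prop), lintegral_const_mul _ m1, lintegral_const_mul _ m2]
    _ ≤ _ := by
        rw [mul_assoc 2]
        gcongr

/-- Pitt's inequality for power weights. -/
theorem exists_pitt [Nontrivial V] {m : ℝ} (hm : 0 < m) (hmd : m < dim) :
    ∃ C : ℝ≥0∞, C ≠ ⊤ ∧ ∀ f : 𝓢(V, ℂ),
      ∫⁻ ξ, ENNReal.ofReal (‖ξ‖ ^ (-m)) * ‖𝓕 f ξ‖ₑ ^ 2 ≤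
        C * ∫⁻ x, ENNReal.ofReal (‖x‖ ^ m) * ‖f x‖ₑ ^ 2 := by
  obtain ⟨b, hmb, hbd⟩ := exists_between hmd
  set A : ℝ≥0∞ := volume (Metric.ball (0 : V) 1) *
    (σ univ * ENNReal.ofReal (2 ^ (dim - b) / (dim - b))) with hA
  have hAtop : A ≠ ⊤ := by
    refine ENNReal.mul_ne_top measure_ball_lt_top.ne ?_
    exact ENNReal.mul_ne_top (measure_ne_top _ _) ENNReal.ofReal_ne_top
  refine ⟨ENNReal.ofReal m * (2 * A * ENNReal.ofReal (2 ^ (b - m) / (b - m)) +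
    2 * ENNReal.ofReal (1 / m)), ?_, fun f => ?_⟩
  · finiteness
  have h0 : ∀ᵐ x : V, x ≠ 0 := by simp [ae_iff]
  have mf : Measurable fun x => ‖f x‖ₑ ^ 2 := (f.continuous.measurable.enorm).pow_const 2
  have mF : Measurable fun ξ => ‖𝓕 f ξ‖ₑ ^ 2 := ((𝓕 f).continuous.measurable.enorm).pow_const 2
  have k1 : Measurable fun t : ℝ => ENNReal.ofReal (t ^ (-m - 1)) := by fun_prop
  have k2 : Measurable fun t : ℝ => ENNReal.ofReal (t ^ (b - m - 1)) := by fun_prop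
  have q0 : ∫⁻ ξ, ENNReal.ofReal (‖ξ‖ ^ (-m)) * ‖𝓕 f ξ‖ₑ ^ 2 =
      ENNReal.ofReal m * ∫⁻ t in Ioi (0 : ℝ), ENNReal.ofReal (t ^ (-m - 1)) *
        ∫⁻ ξ in {ξ : V | ‖ξ‖ < t}, ‖𝓕 f ξ‖ₑ ^ 2 := by
    have := lintegral_mul_setLIntegral_swap (volume.restrict (Ioi (0 : ℝ))) (volume : Measure V)
      k1 mF (S := {p : ℝ × V | ‖p.2‖ < p.1}) (measurableSet_lt (by fun_prop) (by fun_prop))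
    simp only [mem_ofPred_eq] at this
    rw [this, ← lintegral_const_mul' _ _ ENNReal.ofReal_ne_top]
    refine lintegral_congr_ae ?_
    filter_upwards [h0] with ξ hξ
    have hx : 0 < ‖ξ‖ := norm_pos_iff.2 hξ
    rw [Measure.restrict_restrict (measurableSet_lt (by fun_prop) (by fun_prop)),
      show {t : ℝ | ‖ξ‖ < t} ∩ Ioi 0 = Ioi ‖ξ‖ from
        inter_eq_left.2 fun t ht => hx.trans ht, lintegral_Ioi_rpow_neg hm hx, ← mul_assoc,
      ← ENNReal.ofReal_mul hm.le, mul_div_cancel₀ _ hm.ne']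
  have q1 : ∫⁻ t in Ioi (0 : ℝ), ENNReal.ofReal (t ^ (b - m - 1)) *
      ∫⁻ x in {x : V | ‖x‖ ≤ 2 / t}, ENNReal.ofReal (‖x‖ ^ b) * ‖f x‖ₑ ^ 2 =
      ENNReal.ofReal (2 ^ (b - m) / (b - m)) *
        ∫⁻ x, ENNReal.ofReal (‖x‖ ^ m) * ‖f x‖ₑ ^ 2 := by
    have := lintegral_mul_setLIntegral_swap (volume.restrict (Ioi (0 : ℝ))) (volume : Measure V)
      k2 (h := fun x => ENNReal.ofReal (‖x‖ ^ b) * ‖f x‖ₑ ^ 2) (by fun_prop)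
      (S := {p : ℝ × V | ‖p.2‖ ≤ 2 / p.1}) (measurableSet_le (by fun_prop) (by fun_prop))
    simp only [mem_ofPred_eq] at this
    rw [this, ← lintegral_const_mul' _ _ ENNReal.ofReal_ne_top]
    refine lintegral_congr_ae ?_
    filter_upwards [h0] with x hx0
    have hx : 0 < ‖x‖ := norm_pos_iff.2 hx0
    have hset : {t : ℝ | ‖x‖ ≤ 2 / t} ∩ Ioi 0 = Ioc 0 (2 / ‖x‖) := by
      ext t
      constructor
      · rintro ⟨h, ht⟩
        exact ⟨ht, (le_div_comm₀ hx ht).1 h⟩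
      · rintro ⟨ht, h⟩
        exact ⟨(le_div_comm₀ ht hx).1 h, ht⟩
    rw [Measure.restrict_restrict (measurableSet_le (by fun_prop) (by fun_prop)), hset,
      lintegral_Ioc_rpow (by linarith) (by positivity), ← mul_assoc, ← mul_assoc]
    have : 0 < b - m := by linarith
    rw [← ENNReal.ofReal_mul (by positivity), ← ENNReal.ofReal_mul (by positivity)]
    congr 2
    rw [div_rpow (by norm_num) hx.le, rpow_sub hx]
    field_simp
  have q2 : ∫⁻ t in Ioi (0 : ℝ), ENNReal.ofReal (t ^ (-m - 1)) *
      ∫⁻ x in {x : V | 1 / t < ‖x‖}, ‖f x‖ₑ ^ 2 =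
      ENNReal.ofReal (1 / m) * ∫⁻ x, ENNReal.ofReal (‖x‖ ^ m) * ‖f x‖ₑ ^ 2 := by
    have := lintegral_mul_setLIntegral_swap (volume.restrict (Ioi (0 : ℝ))) (volume : Measure V)
      k1 mf (S := {p : ℝ × V | 1 / p.1 < ‖p.2‖}) (measurableSet_lt (by fun_prop) (by fun_prop))
    simp only [mem_ofPred_eq] at this
    rw [this, ← lintegral_const_mul' _ _ ENNReal.ofReal_ne_top]
    refine lintegral_congr_ae ?_
    filter_upwards [h0] with x hx0
    have hx : 0 < ‖x‖ := norm_pos_iff.2 hx0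
    have hset : {t : ℝ | 1 / t < ‖x‖} ∩ Ioi 0 = Ioi (1 / ‖x‖) := by
      ext t
      constructor
      · rintro ⟨h, ht⟩
        exact (div_lt_comm₀ ht hx).1 h
      · intro h
        have ht : 0 < t := lt_trans (by positivity) h
        exact ⟨(div_lt_comm₀ hx ht).1 h, ht⟩
    rw [Measure.restrict_restrict (measurableSet_lt (by fun_prop) (by fun_prop)), hset,
      lintegral_Ioi_rpow_neg hm (by positivity), ← mul_assoc, ← ENNReal.ofReal_mul (by positivity)]
    congr 2
    rw [one_div, inv_rpow hx.le, rpow_neg hx.le]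
    field_simp
  rw [q0, mul_assoc]
  gcongr
  calc _ ≤ ∫⁻ t in Ioi (0 : ℝ), (2 * A * (ENNReal.ofReal (t ^ (b - m - 1)) *
          ∫⁻ x in {x : V | ‖x‖ ≤ 2 / t}, ENNReal.ofReal (‖x‖ ^ b) * ‖f x‖ₑ ^ 2) +
        2 * (ENNReal.ofReal (t ^ (-m - 1)) * ∫⁻ x in {x : V | 1 / t < ‖x‖}, ‖f x‖ₑ ^ 2)) := by
        refine setLIntegral_mono' measurableSet_Ioi fun t ht => ?_
        have ht : 0 < t := ht
        refine (mul_le_mul_right (setLIntegral_ball_fourier_le hbd f ht) _).trans (le_of_eq ?_)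
        rw [← hA, show b - m - 1 = (-m - 1) + b by ring, rpow_add ht,
          ENNReal.ofReal_mul (by positivity)]
        ring
    _ ≤ _ := by
        rw [lintegral_add_left', lintegral_const_mul' _ _ (by finiteness),
          lintegral_const_mul' _ _ (by finiteness), q1, q2]
        · exact le_of_eq (by ring)
        · refine AEMeasurable.const_mul (k2.aemeasurable.mul ?_) _
          refine (measurable_setLIntegral_section (volume : Measure V)
            (S := {p : ℝ × V | ‖p.2‖ ≤ 2 / p.1}) ?_
            (measurableSet_le (by fun_prop) (by fun_prop))).aemeasurable
          fun_prop

end Pitt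

section ResolventKernel

open SchwartzMap FourierTransform Set
open scoped ENNReal NNReal

theorem lintegral_comp_affine_le {h : ℝ → ℝ≥0∞} (hh : Measurable h) (y : ℝ) {c : ℝ} (hc : 0 < c) :
    ∫⁻ η : ℝ, h (y - η / c) = ENNReal.ofReal c * ∫⁻ x, h x := by
  have hm : Measurable fun x : ℝ => h (y - x) := by fun_prop
  calc ∫⁻ η : ℝ, h (y - η / c) = ∫⁻ x, h (y - x) ∂(volume.map (c⁻¹ * ·)) := by
        rw [lintegral_map hm (by fun_prop)]
        simp only [div_eq_inv_mul]
    _ = _ := by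
        rw [Real.map_volume_mul_left (by positivity), lintegral_smul_measure, inv_inv, abs_of_pos hc,
          lintegral_sub_left_eq_self h y, smul_eq_mul]

theorem enorm_integral_mul_inv_sub_le {w : ℝ → ℂ} (hw : Integrable w) {ζ : ℂ} (hζ : 0 < ζ.im) :
    ‖∫ t : ℝ, w t * (ζ - t)⁻¹‖ₑ ≤ ∫⁻ η : ℝ, ‖∫ t : ℝ, w t * Complex.exp (-(t * η : ℝ) * I)‖ₑ := by
  have hinv : ∀ t : ℝ, (ζ - t)⁻¹ =
      -I * ∫ η in Ioi (0 : ℝ), Complex.exp (I * (ζ - t) * η) := by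
    intro t
    have hne : ζ - t ≠ 0 := by
      intro h
      have := congrArg Complex.im h
      simp at this
      exact hζ.ne' this
    rw [integral_exp_mul_complex_Ioi (by simpa using hζ)]
    field_simp
    simp
  have hE : Integrable (fun η : ℝ => Complex.exp (I * ζ * η)) (volume.restrict (Ioi 0)) :=
    integrableOn_exp_mul_complex_Ioi (by simpa using hζ) 0
  have hprod : Integrable (fun p : ℝ × ℝ => Complex.exp (-(p.1 * p.2 : ℝ) * I) *
      (w p.1 * Complex.exp (I * ζ * p.2)))
      (volume.prod (volume.restrict (Ioi 0))) := by
    refine (hw.mul_prod hE).bdd_mul (c := 1) ?_ ?_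
    · exact Continuous.aestronglyMeasurable (by fun_prop)
    · refine ae_of_all _ fun p => ?_
      rw [← Complex.ofReal_neg, Complex.norm_exp_ofReal_mul_I]
  have h1 : ∫ t : ℝ, w t * (ζ - t)⁻¹ = -I * ∫ η in Ioi (0 : ℝ), Complex.exp (I * ζ * η) *
      ∫ t : ℝ, w t * Complex.exp (-(t * η : ℝ) * I) := by
    calc ∫ t : ℝ, w t * (ζ - t)⁻¹ = ∫ t : ℝ, -I * ∫ η in Ioi (0 : ℝ),
          Complex.exp (-(t * η : ℝ) * I) * (w t * Complex.exp (I * ζ * η)) := by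
          refine integral_congr_ae (ae_of_all _ fun t => ?_)
          simp only
          rw [hinv t, mul_left_comm, ← integral_const_mul]
          congr 2
          refine funext fun η => ?_
          rw [mul_left_comm, ← Complex.exp_add]
          congr 2
          push_cast; ring
      _ = _ := by
          rw [integral_const_mul, integral_integral_swap hprod]
          congr 1
          refine integral_congr_ae (ae_of_all _ fun η => ?_)
          simp only
          rw [← integral_const_mul]
          congr 1
          refine funext fun t => ?_
          ring
  rw [h1, enorm_mul, enorm_neg]
  have hI : ‖I‖ₑ = 1 := by simp [← ofReal_norm]
  rw [hI, one_mul]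
  refine (enorm_integral_le_lintegral_enorm _).trans ?_
  refine (setLIntegral_mono' measurableSet_Ioi (g := fun η : ℝ =>
    ‖∫ t : ℝ, w t * Complex.exp (-(t * η : ℝ) * I)‖ₑ) fun η hη => ?_).trans
    (setLIntegral_le_lintegral _ _)
  have hη : 0 < η := hη
  rw [enorm_mul]
  refine mul_le_of_le_one_left' ?_
  rw [← ofReal_norm, Complex.norm_exp]
  simp only [ENNReal.ofReal_le_one, Real.exp_le_one_iff]
  simp
  positivity

theorem enorm_integral_mul_conj_mul_inv_sub_le_of_pos (u v : 𝓢(ℝ, ℂ)) {ζ : ℂ} (hζ : 0 < ζ.im) :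
    ‖∫ t : ℝ, u t * (starRingEnd ℂ) (v t) * (ζ - t)⁻¹‖ₑ ≤
      ENNReal.ofReal (2 * π) * ((∫⁻ y, ‖𝓕 u y‖ₑ) * ∫⁻ y, ‖𝓕 v y‖ₑ) := by
  have hwi : ∀ y : ℝ, Integrable fun t : ℝ =>
      Complex.exp ((2 * π * t * y : ℝ) * I) * (starRingEnd ℂ) (v t) := by
    intro y
    have hv : Integrable fun t => (starRingEnd ℂ) (v t) :=
      (LinearIsometryEquiv.integrable_comp_iff (Complex.conjLIE)).2 v.integrable
    refine hv.bdd_mul (c := 1) (Continuous.aestronglyMeasurable (by fun_prop)) ?_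
    exact ae_of_all _ fun t => by rw [Complex.norm_exp_ofReal_mul_I]
  have hin : ∀ y : ℝ, ‖∫ t : ℝ, Complex.exp ((2 * π * t * y : ℝ) * I) *
      (starRingEnd ℂ) (v t) * (ζ - t)⁻¹‖ₑ ≤ ENNReal.ofReal (2 * π) * ∫⁻ y, ‖𝓕 v y‖ₑ := by
    intro y
    refine (enorm_integral_mul_inv_sub_le (hwi y) hζ).trans (le_of_eq ?_)
    have hm : Measurable fun x => ‖𝓕 v x‖ₑ := (𝓕 v).continuous.measurable.enorm
    rw [← lintegral_comp_affine_le hm y two_pi_pos]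
    refine lintegral_congr fun η => ?_
    have : ∫ t : ℝ, Complex.exp ((2 * π * t * y : ℝ) * I) * (starRingEnd ℂ) (v t) *
        Complex.exp (-(t * η : ℝ) * I) = (starRingEnd ℂ) (𝓕 v (y - η / (2 * π))) := by
      rw [fourier_coe, Real.fourier_real_eq_integral_exp_smul, ← integral_conj]
      refine integral_congr_ae (ae_of_all _ fun t => ?_)
      simp only [smul_eq_mul, map_mul, ← Complex.exp_conj, conj_ofReal, conj_I]
      rw [mul_right_comm, ← Complex.exp_add]
      congr 2
      push_cast
      field_simp
      ring
    rw [this, RCLike.enorm_conj]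
  have hconj : Integrable fun t : ℝ => (starRingEnd ℂ) (v t) * (ζ - t)⁻¹ := by
    have := (hwi 0)
    simp only [mul_zero, ofReal_zero, zero_mul, Complex.exp_zero, one_mul] at this
    refine this.mul_bdd (c := ζ.im⁻¹) ?_ ?_
    · refine Continuous.aestronglyMeasurable ?_
      refine Continuous.inv₀ (by fun_prop) fun t h => ?_
      have := congrArg Complex.im h
      simp at this
      exact hζ.ne' this
    · refine ae_of_all _ fun t => ?_
      rw [norm_inv]
      refine inv_anti₀ hζ ?_
      have := Complex.abs_im_le_norm (ζ - t)
      simp only [sub_im, ofReal_im, sub_zero] at this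
      exact (le_abs_self _).trans this
  have hu : ∀ t, u t = ∫ y : ℝ, Complex.exp ((2 * π * t * y : ℝ) * I) * 𝓕 u y := by
    intro t
    have h : 𝓕⁻ (𝓕 u) = u :=
      FourierTransform.fourierInv_fourier_eq (E := 𝓢(ℝ, ℂ)) (F := 𝓢(ℝ, ℂ)) u
    conv_lhs => rw [← h]
    rw [fourierInv_coe, Real.fourierInv_eq']
    refine integral_congr_ae (ae_of_all _ fun y => ?_)
    simp only [smul_eq_mul, RCLike.inner_apply, conj_trivial]
    rw [show 2 * π * (t * y) = 2 * π * t * y by ring]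
  have hprod : Integrable (fun p : ℝ × ℝ => Complex.exp ((2 * π * p.1 * p.2 : ℝ) * I) *
      ((starRingEnd ℂ) (v p.1) * (ζ - p.1)⁻¹ * 𝓕 u p.2)) (volume.prod volume) := by
    refine (hconj.mul_prod (𝓕 u).integrable).bdd_mul (c := 1) ?_ ?_
    · exact Continuous.aestronglyMeasurable (by fun_prop)
    · refine ae_of_all _ fun p => ?_
      rw [Complex.norm_exp_ofReal_mul_I]
  have h1 : ∫ t : ℝ, u t * (starRingEnd ℂ) (v t) * (ζ - t)⁻¹ =
      ∫ y : ℝ, 𝓕 u y * ∫ t : ℝ, Complex.exp ((2 * π * t * y : ℝ) * I) *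
        (starRingEnd ℂ) (v t) * (ζ - t)⁻¹ := by
    calc _ = ∫ t : ℝ, ∫ y : ℝ, Complex.exp ((2 * π * t * y : ℝ) * I) *
          ((starRingEnd ℂ) (v t) * (ζ - t)⁻¹ * 𝓕 u y) := by
          refine integral_congr_ae (ae_of_all _ fun t => ?_)
          simp only
          conv_lhs => rw [hu t, mul_assoc, ← integral_mul_const]
          congr 1
          refine funext fun y => ?_
          ring
      _ = _ := by
          rw [integral_integral_swap hprod]
          refine integral_congr_ae (ae_of_all _ fun y => ?_)
          simp only
          rw [← integral_const_mul]
          congr 1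
          refine funext fun t => ?_
          ring
  rw [h1]
  refine (enorm_integral_le_lintegral_enorm _).trans ?_
  calc _ ≤ ∫⁻ y, ‖𝓕 u y‖ₑ * (ENNReal.ofReal (2 * π) * ∫⁻ y, ‖𝓕 v y‖ₑ) := by
        refine lintegral_mono fun y => ?_
        rw [enorm_mul]
        gcongr
        exact hin y
    _ = _ := by
        rw [lintegral_mul_const _ (𝓕 u).continuous.measurable.enorm]
        ring

theorem enorm_integral_mul_conj_mul_inv_sub_le (u v : 𝓢(ℝ, ℂ)) {ζ : ℂ} (hζ : ζ.im ≠ 0) :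
    ‖∫ t : ℝ, u t * (starRingEnd ℂ) (v t) * (ζ - t)⁻¹‖ₑ ≤
      ENNReal.ofReal (2 * π) * ((∫⁻ y, ‖𝓕 u y‖ₑ) * ∫⁻ y, ‖𝓕 v y‖ₑ) := by
  rcases hζ.lt_or_gt with h | h
  · have h' : 0 < ((starRingEnd ℂ) ζ).im := by simpa using h
    have := enorm_integral_mul_conj_mul_inv_sub_le_of_pos v u h'
    rw [mul_comm (∫⁻ y, ‖𝓕 v y‖ₑ)] at this
    refine le_trans (le_of_eq ?_) this
    rw [← RCLike.enorm_conj, ← integral_conj]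
    congr 2
    refine funext fun t => ?_
    simp only [map_mul, map_inv₀, map_sub, conj_ofReal, conj_conj]
    ring
  · exact enorm_integral_mul_conj_mul_inv_sub_le_of_pos u v h

theorem exists_sq_lintegral_enorm_le {p : ℝ} (hp : 1 < p) :
    ∃ B : ℝ≥0∞, B ≠ ⊤ ∧ ∀ h : ℝ → ℂ, Measurable h →
      (∫⁻ y, ‖h y‖ₑ) ^ 2 ≤ B * ∫⁻ y, ENNReal.ofReal (1 + |y| ^ p) * ‖h y‖ₑ ^ 2 := by
  have hfin : ∫⁻ y : ℝ, ENNReal.ofReal ((1 + |y|) ^ (-p)) ≠ ⊤ := by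
    have := finite_integral_one_add_norm (E := ℝ) (μ := volume) (r := p) (by simpa using hp)
    simpa using this.ne
  refine ⟨(∫⁻ y : ℝ, ENNReal.ofReal ((1 + |y|) ^ (-p))) * ENNReal.ofReal (2 ^ p), by finiteness,
    fun h hh => ?_⟩
  have h1 : ∫⁻ y, ‖h y‖ₑ = ∫⁻ y : ℝ, ENNReal.ofReal ((1 + |y|) ^ (-p / 2)) *
      (ENNReal.ofReal ((1 + |y|) ^ (p / 2)) * ‖h y‖ₑ) := by
    refine lintegral_congr fun y => ?_
    rw [← mul_assoc, ← ENNReal.ofReal_mul (by positivity), ← rpow_add (by positivity),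
      show -p / 2 + p / 2 = 0 by ring, rpow_zero]
    simp
  rw [h1]
  refine (sq_lintegral_mul_le _ (by fun_prop) (by fun_prop)).trans ?_
  rw [mul_assoc, ← lintegral_const_mul' _ _ ENNReal.ofReal_ne_top]
  gcongr with y y
  · rw [← ENNReal.ofReal_pow (by positivity), ← rpow_natCast, ← rpow_mul (by positivity)]
    refine ENNReal.ofReal_le_ofReal (le_of_eq ?_)
    congr 1; push_cast; ring
  · rw [mul_pow, ← mul_assoc, ← ENNReal.ofReal_pow (by positivity), ← rpow_natCast,
      ← rpow_mul (by positivity), ← ENNReal.ofReal_mul (by positivity)]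
    gcongr
    rw [show p / 2 * ((2 : ℕ) : ℝ) = p by push_cast; ring]
    have hle : 1 + |y| ≤ 2 * max 1 |y| := by
      have := le_max_left 1 |y|; have := le_max_right 1 |y|; linarith
    calc (1 + |y|) ^ p ≤ (2 * max 1 |y|) ^ p := by gcongr
      _ = 2 ^ p * (max 1 |y|) ^ p := by rw [mul_rpow (by norm_num) (by positivity)]
      _ ≤ _ := by
        gcongr
        rcases max_cases 1 |y| with ⟨h, -⟩ | ⟨h, -⟩ <;> rw [h]
        · rw [one_rpow]; linarith [rpow_nonneg (abs_nonneg y) p]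
        · linarith

theorem lintegral_sq_mul_enorm_fourier_le (u : 𝓢(ℝ, ℂ)) :
    ∫⁻ y, ENNReal.ofReal (y ^ 2) * ‖𝓕 u y‖ₑ ^ 2 ≤ ∫⁻ t, ‖deriv u t‖ₑ ^ 2 := by
  have h := lintegral_enorm_sq_fourier (derivCLM ℂ ℂ u)
  have h2 : ∀ t, derivCLM ℂ ℂ u t = deriv u t := fun t => rfl
  simp only [h2] at h
  rw [← h]
  refine lintegral_mono fun y => ?_
  have hd : 𝓕 (derivCLM ℂ ℂ u) y = (2 * π * I * y) * 𝓕 u y := by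
    have := Real.fourier_deriv u.integrable u.differentiable (derivCLM ℂ ℂ u).integrable
    have := congrFun this y
    rw [fourier_coe, fourier_coe]
    change 𝓕 (deriv u) y = _
    simpa using this
  rw [hd, enorm_mul, mul_pow]
  gcongr
  rw [← ofReal_norm, ← ENNReal.ofReal_pow (norm_nonneg _)]
  refine ENNReal.ofReal_le_ofReal ?_
  simp only [norm_mul, Complex.norm_real, norm_I, RCLike.norm_ofNat, mul_one, mul_pow,
    Real.norm_eq_abs, sq_abs, abs_of_pos pi_pos]
  nlinarith [sq_nonneg y, Real.pi_gt_three, mul_nonneg (sq_nonneg y) (show (0 : ℝ) ≤ 4 * π ^ 2 - 1 by nlinarith [Real.pi_gt_three])]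

end ResolventKernel

section Interpolation

open SchwartzMap FourierTransform Set
open scoped ENNReal NNReal

variable {V : Type*} [NormedAddCommGroup V] [InnerProductSpace ℝ V] [FiniteDimensional ℝ V]
  [MeasurableSpace V] [BorelSpace V]
local notation "σ" => Measure.toSphere (volume : Measure V)
local notation "dim" => Module.finrank ℝ V

section
variable {X : Type*} [MeasurableSpace X] {μ : Measure X} {Y : X → ℝ} {U : 𝓢(V, ℂ) → X → ℂ}
  {C₀ C₁ C₂ : ℝ≥0∞} {m p : ℝ}

/-- Splitting `f` at radius `R` bounds the part of `U f` above the level `R`. -/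
theorem setLIntegral_level_le (hY : Measurable Y)
    (hU : ∀ f, Measurable (U f)) (hadd : ∀ f g x, U (f + g) x = U f x + U g x)
    (h0 : ∀ f, ∫⁻ x, ‖U f x‖ₑ ^ 2 ∂μ ≤ C₀ * ∫⁻ x, ‖f x‖ₑ ^ 2)
    (h1 : ∀ f, ∫⁻ x, ENNReal.ofReal (Y x ^ 2) * ‖U f x‖ₑ ^ 2 ∂μ ≤
      C₁ * ∫⁻ x, ENNReal.ofReal (1 + ‖x‖ ^ 2) * ‖f x‖ₑ ^ 2)
    (f : 𝓢(V, ℂ)) {R : ℝ} (hR : 0 < R) :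
    ∫⁻ x in {x | R ≤ Y x}, ‖U f x‖ₑ ^ 2 ∂μ ≤
      2 * C₀ * (∫⁻ x in {x : V | R ≤ ‖x‖}, ‖f x‖ₑ ^ 2) + 2 * C₁ * (ENNReal.ofReal (R ^ (-2 : ℝ)) *
        ∫⁻ x in {x : V | ‖x‖ < 2 * R}, ENNReal.ofReal (1 + ‖x‖ ^ 2) * ‖f x‖ₑ ^ 2) := by
  obtain ⟨f₁, f₂, rfl, b1, z1, b2, z2⟩ := exists_schwartz_split f hR
  set f := f₁ + f₂
  have e1 : ∀ x, ‖f₁ x‖ₑ ≤ ‖f x‖ₑ := fun x => enorm_le_iff_norm_le.2 (b1 x)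
  have e2 : ∀ x, ‖f₂ x‖ₑ ≤ ‖f x‖ₑ := fun x => enorm_le_iff_norm_le.2 (b2 x)
  have k2 : ∫⁻ x, ‖f₂ x‖ₑ ^ 2 ≤ ∫⁻ x in {x : V | R ≤ ‖x‖}, ‖f x‖ₑ ^ 2 := by
    rw [← lintegral_indicator (measurableSet_le (by fun_prop) (by fun_prop))]
    refine lintegral_mono fun x => ?_
    by_cases hx : R ≤ ‖x‖
    · rw [indicator_of_mem (by exact hx)]; gcongr; exact e2 x
    · rw [z2 x (not_le.1 hx).le]; simp
  have k1 : ∫⁻ x, ENNReal.ofReal (1 + ‖x‖ ^ 2) * ‖f₁ x‖ₑ ^ 2 ≤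
      ∫⁻ x in {x : V | ‖x‖ < 2 * R}, ENNReal.ofReal (1 + ‖x‖ ^ 2) * ‖f x‖ₑ ^ 2 := by
    rw [← lintegral_indicator (measurableSet_lt (by fun_prop) (by fun_prop))]
    refine lintegral_mono fun x => ?_
    by_cases hx : ‖x‖ < 2 * R
    · rw [indicator_of_mem (by exact hx)]; gcongr; exact e1 x
    · rw [z1 x (not_lt.1 hx)]; simp
  have m1 := hU f₁
  have m2 := hU f₂
  have hS : MeasurableSet {x | R ≤ Y x} := measurableSet_le (by fun_prop) (by fun_prop)
  calc _ ≤ ∫⁻ x in {x | R ≤ Y x}, (2 * ‖U f₁ x‖ₑ ^ 2 + 2 * ‖U f₂ x‖ₑ ^ 2) ∂μ := by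
        refine lintegral_mono fun x => ?_
        simp only [f, hadd]
        exact enorm_add_sq_le _ _
    _ = 2 * (∫⁻ x in {x | R ≤ Y x}, ‖U f₁ x‖ₑ ^ 2 ∂μ) +
        2 * ∫⁻ x in {x | R ≤ Y x}, ‖U f₂ x‖ₑ ^ 2 ∂μ := by
        rw [lintegral_add_left (by fun_prop), lintegral_const_mul _ (by fun_prop),
          lintegral_const_mul _ (by fun_prop)]
    _ ≤ 2 * (ENNReal.ofReal (R ^ (-2 : ℝ)) * (C₁ *
          ∫⁻ x in {x : V | ‖x‖ < 2 * R}, ENNReal.ofReal (1 + ‖x‖ ^ 2) * ‖f x‖ₑ ^ 2)) +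
        2 * (C₀ * ∫⁻ x in {x : V | R ≤ ‖x‖}, ‖f x‖ₑ ^ 2) := by
        gcongr
        · refine le_trans ?_ (mul_le_mul_right ((h1 f₁).trans (mul_le_mul_right k1 _)) _)
          rw [← lintegral_const_mul' _ _ ENNReal.ofReal_ne_top]
          refine le_trans (setLIntegral_mono' hS fun x hx => ?_) (setLIntegral_le_lintegral _ _)
          have hx : R ≤ Y x := hx
          rw [← mul_assoc, ← ENNReal.ofReal_mul (by positivity)]
          refine le_mul_of_one_le_left (by positivity) ?_
          rw [ENNReal.one_le_ofReal, rpow_neg hR.le, inv_mul_eq_div, one_le_div (by positivity)]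
          rw [show (2 : ℝ) = ((2 : ℕ) : ℝ) by norm_num, rpow_natCast]
          gcongr
        · exact (setLIntegral_le_lintegral _ _).trans ((h0 f₂).trans (mul_le_mul_right k2 _))
    _ = _ := by ring

theorem lintegral_high_le [SFinite μ] (hY : Measurable Y) (hY0 : ∀ x, 0 ≤ Y x)
    (hU : ∀ f, Measurable (U f)) (hadd : ∀ f g x, U (f + g) x = U f x + U g x)
    (hC0 : C₀ ≠ ⊤) (hC1 : C₁ ≠ ⊤)
    (h0 : ∀ f, ∫⁻ x, ‖U f x‖ₑ ^ 2 ∂μ ≤ C₀ * ∫⁻ x, ‖f x‖ₑ ^ 2)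
    (h1 : ∀ f, ∫⁻ x, ENNReal.ofReal (Y x ^ 2) * ‖U f x‖ₑ ^ 2 ∂μ ≤
      C₁ * ∫⁻ x, ENNReal.ofReal (1 + ‖x‖ ^ 2) * ‖f x‖ₑ ^ 2)
    (hp : 0 < p) (hp2 : p < 2) (hpm : p ≤ m) (f : 𝓢(V, ℂ)) (hf : ∀ x, ‖x‖ ≤ 1 → f x = 0) :
    ∫⁻ x, ENNReal.ofReal (Y x ^ p) * ‖U f x‖ₑ ^ 2 ∂μ ≤
      ENNReal.ofReal p * (2 * C₀ * ENNReal.ofReal (1 / p) +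
        2 * C₁ * ENNReal.ofReal (2 * 2 ^ (2 - p) / (2 - p))) *
        ∫⁻ x, ENNReal.ofReal (‖x‖ ^ m) * ‖f x‖ₑ ^ 2 := by
  have mf : Measurable fun x => ‖f x‖ₑ ^ 2 := (f.continuous.measurable.enorm).pow_const 2
  have mF : Measurable fun x => ‖U f x‖ₑ ^ 2 := (hU f).enorm.pow_const 2
  have k1 : Measurable fun t : ℝ => ENNReal.ofReal (t ^ (p - 1)) := by fun_prop
  have k2 : Measurable fun t : ℝ => ENNReal.ofReal (t ^ (-(2 - p) - 1)) := by fun_prop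
  have hpm' : ∀ x, f x ≠ 0 → ‖x‖ ^ p ≤ ‖x‖ ^ m := fun x hx =>
    rpow_le_rpow_of_exponent_le (not_le.1 fun h => hx (hf x h)).le hpm
  have q0 : ∫⁻ x, ENNReal.ofReal (Y x ^ p) * ‖U f x‖ₑ ^ 2 ∂μ =
      ENNReal.ofReal p * ∫⁻ t in Ioi (0 : ℝ), ENNReal.ofReal (t ^ (p - 1)) *
        ∫⁻ x in {x | t ≤ Y x}, ‖U f x‖ₑ ^ 2 ∂μ := by
    have := lintegral_mul_setLIntegral_swap (volume.restrict (Ioi (0 : ℝ))) μ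
      k1 mF (S := {q : ℝ × X | q.1 ≤ Y q.2}) (measurableSet_le (by fun_prop) (by fun_prop))
    simp only [mem_ofPred_eq] at this
    rw [this, ← lintegral_const_mul' _ _ ENNReal.ofReal_ne_top]
    refine lintegral_congr fun x => ?_
    rw [Measure.restrict_restrict (measurableSet_le (by fun_prop) (by fun_prop)),
      show {t : ℝ | t ≤ Y x} ∩ Ioi 0 = Ioc 0 (Y x) by ext t; simp [and_comm],
      lintegral_Ioc_rpow hp (hY0 x), ← mul_assoc,
      ← ENNReal.ofReal_mul hp.le, mul_div_cancel₀ _ hp.ne']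
  have q1 : ∫⁻ t in Ioi (0 : ℝ), ENNReal.ofReal (t ^ (p - 1)) *
      ∫⁻ x in {x : V | t ≤ ‖x‖}, ‖f x‖ₑ ^ 2 ≤
      ENNReal.ofReal (1 / p) * ∫⁻ x, ENNReal.ofReal (‖x‖ ^ m) * ‖f x‖ₑ ^ 2 := by
    have := lintegral_mul_setLIntegral_swap (volume.restrict (Ioi (0 : ℝ))) (volume : Measure V)
      k1 mf (S := {q : ℝ × V | q.1 ≤ ‖q.2‖}) (measurableSet_le (by fun_prop) (by fun_prop))
    simp only [mem_ofPred_eq] at this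
    rw [this, ← lintegral_const_mul' _ _ ENNReal.ofReal_ne_top]
    refine lintegral_mono fun x => ?_
    by_cases hx : f x = 0
    · simp [hx]
    simp only
    rw [Measure.restrict_restrict (measurableSet_le (by fun_prop) (by fun_prop)),
      show {t : ℝ | t ≤ ‖x‖} ∩ Ioi 0 = Ioc 0 ‖x‖ by ext t; simp [and_comm],
      lintegral_Ioc_rpow hp (norm_nonneg x), ← mul_assoc, ← ENNReal.ofReal_mul (by positivity)]
    refine mul_le_mul_left (ENNReal.ofReal_le_ofReal ?_) _
    rw [div_eq_inv_mul, one_div]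
    exact mul_le_mul_of_nonneg_left (hpm' x hx) (by positivity)
  have q2 : ∫⁻ t in Ioi (0 : ℝ), ENNReal.ofReal (t ^ (-(2 - p) - 1)) *
      ∫⁻ x in {x : V | ‖x‖ < 2 * t}, ENNReal.ofReal (1 + ‖x‖ ^ 2) * ‖f x‖ₑ ^ 2 ≤
      ENNReal.ofReal (2 * 2 ^ (2 - p) / (2 - p)) *
        ∫⁻ x, ENNReal.ofReal (‖x‖ ^ m) * ‖f x‖ₑ ^ 2 := by
    have := lintegral_mul_setLIntegral_swap (volume.restrict (Ioi (0 : ℝ))) (volume : Measure V)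
      k2 (h := fun x => ENNReal.ofReal (1 + ‖x‖ ^ 2) * ‖f x‖ₑ ^ 2) (by fun_prop)
      (S := {q : ℝ × V | ‖q.2‖ < 2 * q.1}) (measurableSet_lt (by fun_prop) (by fun_prop))
    simp only [mem_ofPred_eq] at this
    rw [this, ← lintegral_const_mul' _ _ ENNReal.ofReal_ne_top]
    refine lintegral_mono fun x => ?_
    by_cases hx : f x = 0
    · simp [hx]
    have hx1 : 1 < ‖x‖ := not_le.1 fun h => hx (hf x h)
    have hx0 : 0 < ‖x‖ := by linarith
    have h2p : 0 < 2 - p := by linarith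
    have hset : {t : ℝ | ‖x‖ < 2 * t} ∩ Ioi 0 = Ioi (‖x‖ / 2) := by
      ext t
      constructor
      · rintro ⟨h, -⟩
        have h : ‖x‖ < 2 * t := h
        show ‖x‖ / 2 < t
        linarith
      · intro h
        have h : ‖x‖ / 2 < t := h
        exact ⟨show ‖x‖ < 2 * t by linarith, show 0 < t by linarith⟩
    simp only
    rw [Measure.restrict_restrict (measurableSet_lt (by fun_prop) (by fun_prop)), hset,
      lintegral_Ioi_rpow_neg h2p (by positivity), ← mul_assoc, ← mul_assoc,
      ← ENNReal.ofReal_mul (by positivity), ← ENNReal.ofReal_mul (by positivity)]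
    refine mul_le_mul_left (ENNReal.ofReal_le_ofReal ?_) _
    calc (‖x‖ / 2) ^ (-(2 - p)) / (2 - p) * (1 + ‖x‖ ^ 2)
        ≤ (‖x‖ / 2) ^ (-(2 - p)) / (2 - p) * (2 * ‖x‖ ^ 2) := by gcongr; nlinarith
      _ = 2 * 2 ^ (2 - p) / (2 - p) * ‖x‖ ^ p := by
        rw [div_rpow hx0.le (by norm_num), rpow_neg (by norm_num : (0 : ℝ) ≤ 2),
          show -(2 - p) = p - (2 : ℕ) by push_cast; ring, rpow_sub hx0, rpow_natCast]
        field_simp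
      _ ≤ _ := mul_le_mul_of_nonneg_left (hpm' x hx) (by positivity)
  rw [q0, mul_assoc]
  gcongr
  calc _ ≤ ∫⁻ t in Ioi (0 : ℝ), (2 * C₀ * (ENNReal.ofReal (t ^ (p - 1)) *
          ∫⁻ x in {x : V | t ≤ ‖x‖}, ‖f x‖ₑ ^ 2) +
        2 * C₁ * (ENNReal.ofReal (t ^ (-(2 - p) - 1)) *
          ∫⁻ x in {x : V | ‖x‖ < 2 * t}, ENNReal.ofReal (1 + ‖x‖ ^ 2) * ‖f x‖ₑ ^ 2)) := by
        refine setLIntegral_mono' measurableSet_Ioi fun t ht => ?_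
        have ht : 0 < t := ht
        refine (mul_le_mul_right (setLIntegral_level_le hY hU hadd h0 h1 f ht) _).trans
          (le_of_eq ?_)
        rw [show -(2 - p) - 1 = (p - 1) + (-2) by ring, rpow_add ht,
          ENNReal.ofReal_mul (by positivity)]
        ring
    _ ≤ _ := by
        rw [lintegral_add_left', lintegral_const_mul' _ _ (by finiteness),
          lintegral_const_mul' _ _ (by finiteness), add_mul, mul_assoc (2 * C₀), mul_assoc (2 * C₁)]
        · gcongr
        · refine AEMeasurable.const_mul (k1.aemeasurable.mul ?_) _
          exact (measurable_setLIntegral_section (volume : Measure V)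
            (S := {q : ℝ × V | q.1 ≤ ‖q.2‖}) mf
            (measurableSet_le (by fun_prop) (by fun_prop))).aemeasurable

/-- A real-interpolation estimate: bounds at `L²` and `H¹` level, with a uniform bound for
compactly supported `f`, give a weighted bound with weight `‖x‖ ^ m`. -/
theorem exists_lintegral_one_add_rpow_le [Nontrivial V] [SFinite μ] (hY : Measurable Y)
    (hY0 : ∀ x, 0 ≤ Y x)
    (hU : ∀ f, Measurable (U f)) (hadd : ∀ f g x, U (f + g) x = U f x + U g x)
    (hC0 : C₀ ≠ ⊤) (hC1 : C₁ ≠ ⊤) (hC2 : C₂ ≠ ⊤)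
    (h0 : ∀ f, ∫⁻ x, ‖U f x‖ₑ ^ 2 ∂μ ≤ C₀ * ∫⁻ x, ‖f x‖ₑ ^ 2)
    (h1 : ∀ f, ∫⁻ x, ENNReal.ofReal (Y x ^ 2) * ‖U f x‖ₑ ^ 2 ∂μ ≤
      C₁ * ∫⁻ x, ENNReal.ofReal (1 + ‖x‖ ^ 2) * ‖f x‖ₑ ^ 2)
    (h2 : ∀ f, ∫⁻ x, ENNReal.ofReal (1 + Y x ^ 2) * ‖U f x‖ₑ ^ 2 ∂μ ≤
      C₂ * (∫⁻ x, ENNReal.ofReal (1 + ‖x‖) * ‖f x‖ₑ) ^ 2)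
    (hp : 0 < p) (hp2 : p < 2) (hpm : p ≤ m) (hmd : m < dim) :
    ∃ C : ℝ≥0∞, C ≠ ⊤ ∧ ∀ f : 𝓢(V, ℂ),
      ∫⁻ x, ENNReal.ofReal (1 + Y x ^ p) * ‖U f x‖ₑ ^ 2 ∂μ ≤
        C * ∫⁻ x, ENNReal.ofReal (‖x‖ ^ m) * ‖f x‖ₑ ^ 2 := by
  set Q : ℝ≥0∞ := ENNReal.ofReal p * (2 * C₀ * ENNReal.ofReal (1 / p) +
        2 * C₁ * ENNReal.ofReal (2 * 2 ^ (2 - p) / (2 - p))) with hQ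
  have hσ : σ univ ≠ ⊤ := measure_ne_top _ _
  set L : ℝ≥0∞ := 2 * C₂ * (9 * (σ univ * ENNReal.ofReal (2 ^ (dim - m) / (dim - m)))) with hL
  refine ⟨2 * L + 2 * (C₀ + Q), ?_, fun f => ?_⟩
  · simp only [hQ, hL]; finiteness
  obtain ⟨f₁, f₂, rfl, b1, z1, b2, z2⟩ := exists_schwartz_split f one_pos
  set f := f₁ + f₂
  have e1 : ∀ x, ‖f₁ x‖ₑ ≤ ‖f x‖ₑ := fun x => enorm_le_iff_norm_le.2 (b1 x)
  have e2 : ∀ x, ‖f₂ x‖ₑ ≤ ‖f x‖ₑ := fun x => enorm_le_iff_norm_le.2 (b2 x)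
  have w1 : ∫⁻ x, ENNReal.ofReal (‖x‖ ^ m) * ‖f₁ x‖ₑ ^ 2 ≤
      ∫⁻ x, ENNReal.ofReal (‖x‖ ^ m) * ‖f x‖ₑ ^ 2 := by gcongr with x; exact e1 x
  have w2 : ∫⁻ x, ENNReal.ofReal (‖x‖ ^ m) * ‖f₂ x‖ₑ ^ 2 ≤
      ∫⁻ x, ENNReal.ofReal (‖x‖ ^ m) * ‖f x‖ₑ ^ 2 := by gcongr with x; exact e2 x
  have m1 := hU f₁
  have m2 := hU f₂
  have low : ∫⁻ x, ENNReal.ofReal (1 + Y x ^ p) * ‖U f₁ x‖ₑ ^ 2 ∂μ ≤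
      L * ∫⁻ x, ENNReal.ofReal (‖x‖ ^ m) * ‖f₁ x‖ₑ ^ 2 := by
    calc _ ≤ ∫⁻ x, 2 * (ENNReal.ofReal (1 + Y x ^ 2) * ‖U f₁ x‖ₑ ^ 2) ∂μ := by
          refine lintegral_mono fun x => ?_
          simp only
          rw [← mul_assoc, show (2 : ℝ≥0∞) = ENNReal.ofReal 2 by simp,
            ← ENNReal.ofReal_mul (by norm_num)]
          gcongr
          have : Y x ^ p ≤ 1 + Y x ^ 2 := by
            rcases le_total (Y x) 1 with h | h
            · have := rpow_le_one (hY0 x) h hp.le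
              nlinarith [sq_nonneg (Y x)]
            · have := rpow_le_rpow_of_exponent_le h hp2.le
              rw [show (2 : ℝ) = ((2 : ℕ) : ℝ) by norm_num, rpow_natCast] at this
              linarith
          nlinarith [sq_nonneg (Y x)]
      _ ≤ 2 * (C₂ * (∫⁻ x, ENNReal.ofReal (1 + ‖x‖) * ‖f₁ x‖ₑ) ^ 2) := by
          rw [lintegral_const_mul' _ _ (by finiteness)]
          gcongr
          exact h2 f₁
      _ ≤ 2 * (C₂ * (3 * ∫⁻ x, ‖f₁ x‖ₑ) ^ 2) := by
          gcongr
          rw [← lintegral_const_mul' _ _ (by finiteness)]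
          refine lintegral_mono fun x => ?_
          simp only
          by_cases hx : 2 * 1 ≤ ‖x‖
          · simp [z1 x hx]
          · gcongr
            rw [show (3 : ℝ≥0∞) = ENNReal.ofReal 3 by simp]
            gcongr
            linarith
      _ ≤ 2 * (C₂ * (9 * (σ univ * ENNReal.ofReal (2 ^ (dim - m) / (dim - m)) *
            ∫⁻ x, ENNReal.ofReal (‖x‖ ^ m) * ‖f₁ x‖ₑ ^ 2))) := by
          rw [mul_pow, show (3 : ℝ≥0∞) ^ 2 = 9 by norm_num]
          gcongr
          refine (sq_lintegral_enorm_le_of_support hmd (by norm_num : (0 : ℝ) ≤ 2)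
            f₁.continuous.measurable fun x hx => z1 x (by linarith)).trans ?_
          exact mul_le_mul_right (setLIntegral_le_lintegral _ _) _
      _ = _ := by rw [hL]; ring
  have high : ∫⁻ x, ENNReal.ofReal (1 + Y x ^ p) * ‖U f₂ x‖ₑ ^ 2 ∂μ ≤
      (C₀ + Q) * ∫⁻ x, ENNReal.ofReal (‖x‖ ^ m) * ‖f₂ x‖ₑ ^ 2 := by
    calc _ = ∫⁻ x, (‖U f₂ x‖ₑ ^ 2 + ENNReal.ofReal (Y x ^ p) * ‖U f₂ x‖ₑ ^ 2) ∂μ := by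
          refine lintegral_congr fun x => ?_
          rw [ENNReal.ofReal_add (by norm_num) (rpow_nonneg (hY0 x) _), add_mul]
          simp
      _ = (∫⁻ x, ‖U f₂ x‖ₑ ^ 2 ∂μ) + ∫⁻ x, ENNReal.ofReal (Y x ^ p) * ‖U f₂ x‖ₑ ^ 2 ∂μ :=
          lintegral_add_left (by fun_prop) _
      _ ≤ _ := by
          rw [add_mul]
          gcongr
          · refine (h0 f₂).trans ?_
            gcongr with x
            by_cases hx : ‖x‖ ≤ 1
            · simp [z2 x hx]
            · refine le_mul_of_one_le_left (by positivity) ?_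
              rw [ENNReal.one_le_ofReal]
              exact one_le_rpow (by linarith) (by linarith)
          · exact lintegral_high_le hY hY0 hU hadd hC0 hC1 h0 h1 hp hp2 hpm f₂ z2
  calc _ ≤ ∫⁻ x, (2 * (ENNReal.ofReal (1 + Y x ^ p) * ‖U f₁ x‖ₑ ^ 2) +
        2 * (ENNReal.ofReal (1 + Y x ^ p) * ‖U f₂ x‖ₑ ^ 2)) ∂μ := by
        refine lintegral_mono fun x => ?_
        simp only [f, hadd]
        refine (mul_le_mul_right (enorm_add_sq_le _ _) _).trans (le_of_eq (by ring))
    _ = 2 * (∫⁻ x, ENNReal.ofReal (1 + Y x ^ p) * ‖U f₁ x‖ₑ ^ 2 ∂μ) +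
        2 * ∫⁻ x, ENNReal.ofReal (1 + Y x ^ p) * ‖U f₂ x‖ₑ ^ 2 ∂μ := by
        rw [lintegral_add_left (by fun_prop), lintegral_const_mul' _ _ (by finiteness),
          lintegral_const_mul' _ _ (by finiteness)]
    _ ≤ _ := by
        rw [add_mul, mul_assoc 2, mul_assoc 2]
        exact add_le_add (mul_le_mul_right (low.trans (mul_le_mul_right w1 _)) _)
          (mul_le_mul_right (high.trans (mul_le_mul_right w2 _)) _)
end

end Interpolation

section Shell

open SchwartzMap FourierTransform Set
open scoped ENNReal NNReal

variable {V : Type*} [NormedAddCommGroup V] [InnerProductSpace ℝ V] [FiniteDimensional ℝ V]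
  [MeasurableSpace V] [BorelSpace V]
local notation "σ" => Measure.toSphere (volume : Measure V)
local notation "dim" => Module.finrank ℝ V

section substitution
variable {m ρ : ℝ}

theorem image_mul_rpow_inv_Ioi (hm : 0 < m) (hρ : 0 < ρ) :
    Set.image (fun t : ℝ => ρ * t ^ m⁻¹) (Ioi 0) = Ioi 0 := by
  ext r
  constructor
  · rintro ⟨t, ht, rfl⟩
    have ht : 0 < t := ht
    exact mul_pos hρ (rpow_pos_of_pos ht _)
  · intro hr
    have hr : 0 < r := hr
    have hq : 0 < r / ρ := by positivity
    refine ⟨(r / ρ) ^ m, rpow_pos_of_pos hq _, ?_⟩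
    simp only
    rw [rpow_rpow_inv hq.le hm.ne', mul_div_cancel₀ _ hρ.ne']

theorem injOn_mul_rpow_inv_Ioi (hm : 0 < m) (hρ : 0 < ρ) :
    InjOn (fun t : ℝ => ρ * t ^ m⁻¹) (Ioi 0) := by
  intro s hs t ht h
  have hs : 0 < s := hs
  have ht : 0 < t := ht
  have := mul_left_cancel₀ hρ.ne' h
  exact (rpow_left_inj hs.le ht.le (inv_ne_zero hm.ne')).1 this

theorem hasDerivWithinAt_mul_rpow_inv {t : ℝ} (ht : t ∈ Ioi (0 : ℝ)) :
    HasDerivWithinAt (fun t : ℝ => ρ * t ^ m⁻¹) (ρ * (m⁻¹ * t ^ (m⁻¹ - 1))) (Ioi 0) t :=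
  ((Real.hasDerivAt_rpow_const (Or.inl (ne_of_gt ht))).const_mul ρ).hasDerivWithinAt

theorem lintegral_Ioi_comp_mul_rpow_inv (hm : 0 < m) (hρ : 0 < ρ) (K : ℝ → ℝ≥0∞) :
    ∫⁻ r in Ioi (0 : ℝ), K r =
      ∫⁻ t in Ioi (0 : ℝ), ENNReal.ofReal (ρ * (m⁻¹ * t ^ (m⁻¹ - 1))) * K (ρ * t ^ m⁻¹) := by
  conv_lhs => rw [← image_mul_rpow_inv_Ioi hm hρ]
  rw [lintegral_image_eq_lintegral_abs_deriv_mul measurableSet_Ioi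
    (fun t ht => hasDerivWithinAt_mul_rpow_inv ht) (injOn_mul_rpow_inv_Ioi hm hρ)]
  refine setLIntegral_congr_fun measurableSet_Ioi fun t ht => ?_
  have ht : 0 < t := ht
  rw [abs_of_pos (by positivity)]

theorem integral_Ioi_comp_mul_rpow_inv (hm : 0 < m) (hρ : 0 < ρ) (K : ℝ → ℂ) :
    ∫ r in Ioi (0 : ℝ), K r =
      ∫ t in Ioi (0 : ℝ), (ρ * (m⁻¹ * t ^ (m⁻¹ - 1))) • K (ρ * t ^ m⁻¹) := by
  conv_lhs => rw [← image_mul_rpow_inv_Ioi hm hρ]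
  rw [integral_image_eq_integral_abs_deriv_smul measurableSet_Ioi
    (fun t ht => hasDerivWithinAt_mul_rpow_inv ht) (injOn_mul_rpow_inv_Ioi hm hρ)]
  refine setIntegral_congr_fun measurableSet_Ioi fun t ht => ?_
  have ht : 0 < t := ht
  rw [abs_of_pos (by positivity)]

/-- Curves `t ↦ t ^ m⁻¹ • ρ ω • ω` over a shell are controlled by Lebesgue measure. -/
theorem exists_lintegral_shell_le [Nontrivial V] (hm : 1 ≤ m) {ρ : Metric.sphere (0 : V) 1 → ℝ}
    {c : ℝ} (hc : 0 < c) (hρ : ∀ ω, c ≤ ρ ω) :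
    ∃ C : ℝ≥0∞, C ≠ ⊤ ∧ ∀ H : V → ℝ≥0∞, Measurable H →
      ∫⁻ ω, (∫⁻ t in Icc (1 / 2 : ℝ) (3 / 2), H (t ^ m⁻¹ • ρ ω • (ω : V))) ∂σ ≤ C * ∫⁻ x, H x := by
  have hm0 : 0 < m := by linarith
  set κ : ℝ := (c * (1 / 2) ^ m⁻¹) ^ (dim - 1) * (c * (m⁻¹ * (3 / 2) ^ (m⁻¹ - 1))) with hκ
  have hκ0 : 0 < κ := by positivity
  refine ⟨ENNReal.ofReal κ⁻¹, ENNReal.ofReal_ne_top, fun H hH => ?_⟩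
  rw [lintegral_polar hH, ← lintegral_const_mul' _ _ ENNReal.ofReal_ne_top]
  refine lintegral_mono fun ω => ?_
  have hω : 0 < ρ ω := hc.trans_le (hρ ω)
  simp only
  rw [lintegral_Ioi_comp_mul_rpow_inv hm0 hω, ← lintegral_const_mul' _ _ ENNReal.ofReal_ne_top]
  refine le_trans ?_ (lintegral_mono_set (s := Icc (1 / 2 : ℝ) (3 / 2))
    fun t ht => lt_of_lt_of_le (by norm_num) ht.1)
  refine setLIntegral_mono' measurableSet_Icc fun t ht => ?_
  have ht0 : 0 < t := lt_of_lt_of_le (by norm_num) ht.1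
  rw [smul_smul, mul_comm (t ^ m⁻¹), ← mul_assoc, ← mul_assoc, ← ENNReal.ofReal_mul (by positivity),
    ← ENNReal.ofReal_mul (by positivity)]
  refine le_mul_of_one_le_left (by positivity) ?_
  rw [ENNReal.one_le_ofReal, mul_assoc, inv_mul_eq_div, one_le_div hκ0, hκ,
    mul_comm (ρ ω * (m⁻¹ * t ^ (m⁻¹ - 1)))]
  have h1 : m⁻¹ - 1 ≤ 0 := by linarith [inv_le_one_of_one_le₀ hm]
  have h2 : (3 / 2 : ℝ) ^ (m⁻¹ - 1) ≤ t ^ (m⁻¹ - 1) := rpow_le_rpow_of_nonpos ht0 ht.2 h1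
  have h3 : (1 / 2 : ℝ) ^ m⁻¹ ≤ t ^ m⁻¹ := rpow_le_rpow (by norm_num) ht.1 (by positivity)
  have h4 := hρ ω
  gcongr

end substitution

section gradient

local notation "e" => stdOrthonormalBasis ℝ V

/-- The squared size of the Fourier transform together with its gradient. -/
def fourierEnergy (f : 𝓢(V, ℂ)) (ξ : V) : ℝ≥0∞ :=
  ‖𝓕 f ξ‖ₑ ^ 2 + ∑ i, ‖fderiv ℝ (𝓕 f : 𝓢(V, ℂ)) ξ (e i)‖ₑ ^ 2

theorem exists_fourier_eq_fderiv (f : 𝓢(V, ℂ)) (v : V) (hv : ‖v‖ = 1) :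
    ∃ g : 𝓢(V, ℂ), (∀ ξ, 𝓕 g ξ = fderiv ℝ (𝓕 f : 𝓢(V, ℂ)) ξ v) ∧
      ∀ x, ‖g x‖ₑ ≤ ENNReal.ofReal (2 * π) * (ENNReal.ofReal ‖x‖ * ‖f x‖ₑ) := by
  refine ⟨-(2 * π * Complex.I) • smulLeftCLM ℂ (inner ℝ · v) f, fun ξ => ?_, fun x => ?_⟩
  · have := congrArg (fun h : 𝓢(V, ℂ) => h ξ) (lineDerivOp_fourier_eq f v)
    exact this.symm
  · have : (inner ℝ · v : V → ℝ).HasTemperateGrowth := by fun_prop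
    rw [smul_apply, smulLeftCLM_apply_apply this, enorm_smul, enorm_smul]
    gcongr
    · rw [← ofReal_norm]
      refine ENNReal.ofReal_le_ofReal (le_of_eq ?_)
      simp [abs_of_pos pi_pos]
    · rw [← ofReal_norm]
      refine ENNReal.ofReal_le_ofReal ?_
      simpa [hv] using norm_inner_le_norm (𝕜 := ℝ) x v

theorem measurable_fourierEnergy (f : 𝓢(V, ℂ)) : Measurable (fourierEnergy f) := by
  unfold fourierEnergy
  refine Measurable.add ((𝓕 f).continuous.measurable.enorm.pow_const 2) ?_
  refine Finset.measurable_sum _ fun i _ => ?_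
  obtain ⟨g, hg, -⟩ := exists_fourier_eq_fderiv f (e i) (by simp)
  simp_rw [← hg]
  exact (𝓕 g).continuous.measurable.enorm.pow_const 2

theorem lintegral_fourierEnergy_le (f : 𝓢(V, ℂ)) :
    ∫⁻ ξ, fourierEnergy f ξ ≤ (1 + dim * ENNReal.ofReal (2 * π) ^ 2) *
      ∫⁻ x, ENNReal.ofReal (1 + ‖x‖ ^ 2) * ‖f x‖ₑ ^ 2 := by
  unfold fourierEnergy
  rw [lintegral_add_left ((𝓕 f).continuous.measurable.enorm.pow_const 2), lintegral_finsetSum',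
    lintegral_enorm_sq_fourier, add_mul, one_mul]
  · refine add_le_add ?_ ?_
    · refine lintegral_mono fun x => le_mul_of_one_le_left (by positivity) ?_
      rw [ENNReal.one_le_ofReal]
      linarith [sq_nonneg ‖x‖]
    · calc _ ≤ ∑ i : Fin dim, ENNReal.ofReal (2 * π) ^ 2 *
            ∫⁻ x, ENNReal.ofReal (1 + ‖x‖ ^ 2) * ‖f x‖ₑ ^ 2 := by
            refine Finset.sum_le_sum fun i _ => ?_
            obtain ⟨g, hg, hb⟩ := exists_fourier_eq_fderiv f (e i) (by simp)
            simp_rw [← hg]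
            rw [lintegral_enorm_sq_fourier, ← lintegral_const_mul' _ _ (by finiteness)]
            refine lintegral_mono fun x => (pow_le_pow_left' (hb x) 2).trans ?_
            rw [mul_pow, mul_pow, ← ENNReal.ofReal_pow (norm_nonneg x)]
            gcongr
            linarith
        _ = _ := by simp [mul_assoc]
  · intro i _
    obtain ⟨g, hg, -⟩ := exists_fourier_eq_fderiv f (e i) (by simp)
    simp_rw [← hg]
    exact ((𝓕 g).continuous.measurable.enorm.pow_const 2).aemeasurable

theorem fourierEnergy_le (f : 𝓢(V, ℂ)) (ξ : V) :
    fourierEnergy f ξ ≤ (1 + dim * ENNReal.ofReal (2 * π) ^ 2) *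
      (∫⁻ x, ENNReal.ofReal (1 + ‖x‖) * ‖f x‖ₑ) ^ 2 := by
  unfold fourierEnergy
  rw [add_mul, one_mul]
  refine add_le_add ?_ ?_
  · gcongr
    refine (enorm_fourier_le f ξ).trans (lintegral_mono fun x => ?_)
    refine le_mul_of_one_le_left (by positivity) ?_
    rw [ENNReal.one_le_ofReal]
    linarith [norm_nonneg x]
  · calc _ ≤ ∑ i : Fin dim, ENNReal.ofReal (2 * π) ^ 2 *
            (∫⁻ x, ENNReal.ofReal (1 + ‖x‖) * ‖f x‖ₑ) ^ 2 := by
            refine Finset.sum_le_sum fun i _ => ?_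
            obtain ⟨g, hg, hb⟩ := exists_fourier_eq_fderiv f (e i) (by simp)
            rw [← hg, ← mul_pow]
            gcongr
            refine (enorm_fourier_le g ξ).trans ?_
            rw [← lintegral_const_mul' _ _ (by finiteness)]
            refine lintegral_mono fun x => (hb x).trans ?_
            gcongr
            linarith
        _ = _ := by simp [mul_assoc]

theorem enorm_fderiv_fourier_sq_le (f : 𝓢(V, ℂ)) (ξ θ : V) :
    ‖fderiv ℝ (𝓕 f : 𝓢(V, ℂ)) ξ θ‖ₑ ^ 2 ≤
      dim * ‖θ‖ₑ ^ 2 * ∑ i, ‖fderiv ℝ (𝓕 f : 𝓢(V, ℂ)) ξ (e i)‖ₑ ^ 2 := by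
  set L := fderiv ℝ (𝓕 f : 𝓢(V, ℂ)) ξ
  have h : ‖L θ‖ ^ 2 ≤ dim * ‖θ‖ ^ 2 * ∑ i, ‖L (e i)‖ ^ 2 := by
    have h1 : ‖L θ‖ ≤ ∑ i, ‖θ‖ * ‖L (e i)‖ := by
      conv_lhs => rw [← (e).sum_repr' θ, map_sum]
      refine (norm_sum_le _ _).trans (Finset.sum_le_sum fun i _ => ?_)
      rw [map_smul, norm_smul]
      gcongr
      simpa using norm_inner_le_norm (𝕜 := ℝ) (e i) θ
    calc ‖L θ‖ ^ 2 ≤ (∑ i, ‖θ‖ * ‖L (e i)‖) ^ 2 := by gcongr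
      _ ≤ _ := by
        refine (sq_sum_le_card_mul_sum_sq).trans (le_of_eq ?_)
        simp only [mul_pow, Finset.card_univ, Fintype.card_fin, ← Finset.mul_sum, mul_assoc]
  have := ENNReal.ofReal_le_ofReal h
  rw [ENNReal.ofReal_mul (by positivity), ENNReal.ofReal_mul (by positivity),
    ENNReal.ofReal_sum_of_nonneg (fun i _ => by positivity)] at this
  simpa [ENNReal.ofReal_pow, ofReal_norm] using this

end gradient

end Shell

section Radial

open SchwartzMap FourierTransform Set
open scoped ENNReal NNReal

variable {V : Type*} [NormedAddCommGroup V] [InnerProductSpace ℝ V]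
local notation "dim" => Module.finrank ℝ V

/-- Smooth functions on the line supported in `[1/2, 3/2]`. -/
structure IsCutoff (ψ : ℝ → ℝ) : Prop where
  contDiff : ContDiff ℝ (⊤ : ℕ∞) ψ
  support_subset : Function.support ψ ⊆ Icc (1 / 2) (3 / 2)

section radial
variable {ψ : ℝ → ℝ}

theorem IsCutoff.eq_zero (hψ : IsCutoff ψ) {t : ℝ} (ht : t ∉ Icc (1 / 2 : ℝ) (3 / 2)) : ψ t = 0 :=
  by_contra fun h => ht (hψ.support_subset h)

theorem IsCutoff.eventuallyEq_zero (hψ : IsCutoff ψ) {t : ℝ} (ht : t ∉ Icc (1 / 2 : ℝ) (3 / 2)) :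
    ∀ᶠ s in nhds t, ψ s = 0 := by
  filter_upwards [isClosed_Icc.isOpen_compl.mem_nhds ht] with s hs
  exact hψ.eq_zero hs

theorem IsCutoff.contDiff_radial (hψ : IsCutoff ψ) (m : ℝ) (F : 𝓢(V, ℂ)) (θ : V) :
    ContDiff ℝ (⊤ : ℕ∞) fun t : ℝ => (ψ t : ℂ) * F (t ^ m⁻¹ • θ) := by
  rw [contDiff_iff_contDiffAt]
  intro t
  by_cases ht : t ∈ Icc (1 / 2 : ℝ) (3 / 2)
  · have ht0 : t ≠ 0 := by have := ht.1; intro h; norm_num [h] at this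
    refine ContDiffAt.mul ?_ ?_
    · exact Complex.ofRealCLM.contDiff.contDiffAt.comp t hψ.contDiff.contDiffAt
    · refine (F.smooth _).contDiffAt.comp t ?_
      exact (contDiffAt_id.rpow_const_of_ne ht0).smul contDiffAt_const
  · refine (contDiffAt_const (c := (0 : ℂ))).congr_of_eventuallyEq ?_
    filter_upwards [hψ.eventuallyEq_zero ht] with s hs
    simp [hs]

theorem IsCutoff.hasCompactSupport_radial (hψ : IsCutoff ψ) (m : ℝ) (F : 𝓢(V, ℂ)) (θ : V) :
    HasCompactSupport fun t : ℝ => (ψ t : ℂ) * F (t ^ m⁻¹ • θ) :=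
  HasCompactSupport.intro (isCompact_Icc (a := (1 / 2 : ℝ)) (b := 3 / 2)) fun t ht => by simp [hψ.eq_zero ht]

/-- The cut-off restriction of `F` to the curve `t ↦ t ^ m⁻¹ • θ`. -/
def IsCutoff.radial (hψ : IsCutoff ψ) (m : ℝ) (F : 𝓢(V, ℂ)) (θ : V) : 𝓢(ℝ, ℂ) :=
  (hψ.hasCompactSupport_radial m F θ).toSchwartzMap (hψ.contDiff_radial m F θ)

theorem IsCutoff.radial_apply (hψ : IsCutoff ψ) (m : ℝ) (F : 𝓢(V, ℂ)) (θ : V) (t : ℝ) :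
    hψ.radial m F θ t = (ψ t : ℂ) * F (t ^ m⁻¹ • θ) := rfl

theorem IsCutoff.radial_add (hψ : IsCutoff ψ) (m : ℝ) (F G : 𝓢(V, ℂ)) (θ : V) :
    hψ.radial m (F + G) θ = hψ.radial m F θ + hψ.radial m G θ := by
  ext t
  simp only [add_apply, IsCutoff.radial_apply, mul_add]

theorem IsCutoff.exists_bound (hψ : IsCutoff ψ) : ∃ K : ℝ, ∀ t, |ψ t| ≤ K ∧ |deriv ψ t| ≤ K := by
  have hc : HasCompactSupport ψ := HasCompactSupport.intro (isCompact_Icc (a := (1 / 2 : ℝ)) (b := 3 / 2)) fun t ht => hψ.eq_zero ht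
  obtain ⟨K₁, h1⟩ := hc.exists_bound_of_continuous hψ.contDiff.continuous
  obtain ⟨K₂, h2⟩ := hc.deriv.exists_bound_of_continuous (hψ.contDiff.continuous_deriv (by simp))
  exact ⟨max K₁ K₂, fun t => ⟨(h1 t).trans (le_max_left _ _), (h2 t).trans (le_max_right _ _)⟩⟩

theorem IsCutoff.hasDerivAt_radial (hψ : IsCutoff ψ) (m : ℝ) (F : 𝓢(V, ℂ)) (θ : V) {t : ℝ}
    (ht : 0 < t) :
    HasDerivAt (hψ.radial m F θ) (((deriv ψ t : ℝ) : ℂ) * F (t ^ m⁻¹ • θ) +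
      (ψ t : ℂ) * fderiv ℝ F (t ^ m⁻¹ • θ) ((m⁻¹ * t ^ (m⁻¹ - 1)) • θ)) t := by
  have h1 : HasDerivAt (fun t => (ψ t : ℂ)) ((deriv ψ t : ℝ) : ℂ) t :=
    ((hψ.contDiff.differentiable (by simp)) t).hasDerivAt.ofReal_comp
  have h2 : HasDerivAt (fun t : ℝ => t ^ m⁻¹ • θ) ((m⁻¹ * t ^ (m⁻¹ - 1)) • θ) t :=
    (Real.hasDerivAt_rpow_const (Or.inl ht.ne')).smul_const θ
  exact h1.mul ((F.differentiable (t ^ m⁻¹ • θ)).hasFDerivAt.comp_hasDerivAt t h2)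

variable [FiniteDimensional ℝ V] [MeasurableSpace V] [BorelSpace V]

theorem IsCutoff.exists_radial_bound (hψ : IsCutoff ψ) {m : ℝ} (hm : 1 ≤ m) (c : ℝ) :
    ∃ K : ℝ≥0∞, K ≠ ⊤ ∧ ∀ (f : 𝓢(V, ℂ)) (θ : V), ‖θ‖ ≤ c →
      (∫⁻ t, ‖hψ.radial m (𝓕 f) θ t‖ₑ ^ 2 ≤
        K * ∫⁻ t in Icc (1 / 2 : ℝ) (3 / 2), ‖𝓕 f (t ^ m⁻¹ • θ)‖ₑ ^ 2) ∧
      (∫⁻ t, ‖deriv (hψ.radial m (𝓕 f) θ) t‖ₑ ^ 2 ≤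
        K * ∫⁻ t in Icc (1 / 2 : ℝ) (3 / 2), fourierEnergy f (t ^ m⁻¹ • θ)) := by
  obtain ⟨K, hK⟩ := hψ.exists_bound
  have hK0 : 0 ≤ K := (abs_nonneg _).trans (hK 0).1
  have hle : ∀ x : ℝ, |x| ≤ K → ‖(x : ℂ)‖ₑ ≤ ENNReal.ofReal K := fun x hx => by
    rw [← ofReal_norm]
    exact ENNReal.ofReal_le_ofReal (by simpa using hx)
  set B := ENNReal.ofReal ((1 / 2) ^ (m⁻¹ - 1)) with hB
  refine ⟨ENNReal.ofReal K ^ 2 * (2 * (1 + dim * (B * ENNReal.ofReal c) ^ 2)), by finiteness,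
    fun f θ hθ => ⟨?_, ?_⟩⟩
  · rw [← lintegral_const_mul' _ _ (by finiteness), ← lintegral_indicator measurableSet_Icc]
    refine lintegral_mono fun t => ?_
    by_cases ht : t ∈ Icc (1 / 2 : ℝ) (3 / 2)
    · rw [indicator_of_mem ht, hψ.radial_apply, enorm_mul, mul_pow]
      gcongr
      refine (pow_le_pow_left' (hle _ (hK t).1) 2).trans ?_
      refine le_mul_of_one_le_right (by positivity) ?_
      rw [mul_add, mul_one]
      exact le_trans (by norm_num) le_self_add
    · simp [hψ.radial_apply, hψ.eq_zero ht]
  · rw [← lintegral_const_mul' _ _ (by finiteness), ← lintegral_indicator measurableSet_Icc]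
    refine lintegral_mono fun t => ?_
    by_cases ht : t ∈ Icc (1 / 2 : ℝ) (3 / 2)
    · have ht0 : 0 < t := lt_of_lt_of_le (by norm_num) ht.1
      have hm0 : 0 < m := by linarith
      have hB1 : ‖(m⁻¹ * t ^ (m⁻¹ - 1)) • θ‖ₑ ≤ B * ENNReal.ofReal c := by
        rw [enorm_smul, hB, ← ofReal_norm, ← ofReal_norm]
        gcongr
        rw [Real.norm_of_nonneg (by positivity)]
        have h1 : m⁻¹ ≤ 1 := inv_le_one_of_one_le₀ hm
        have h2 : t ^ (m⁻¹ - 1) ≤ (1 / 2) ^ (m⁻¹ - 1) :=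
          rpow_le_rpow_of_nonpos (by norm_num) ht.1 (by linarith)
        calc m⁻¹ * t ^ (m⁻¹ - 1) ≤ 1 * t ^ (m⁻¹ - 1) := by gcongr
          _ ≤ _ := by rwa [one_mul]
      rw [indicator_of_mem ht, (hψ.hasDerivAt_radial m (𝓕 f) θ ht0).deriv]
      refine (enorm_add_sq_le _ _).trans ?_
      set ξ := t ^ m⁻¹ • θ
      rw [enorm_mul, enorm_mul, mul_pow, mul_pow]
      calc _ ≤ 2 * (ENNReal.ofReal K ^ 2 * fourierEnergy f ξ) +
            2 * (ENNReal.ofReal K ^ 2 * (dim * (B * ENNReal.ofReal c) ^ 2 * fourierEnergy f ξ)) := by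
            gcongr
            · exact hle _ (hK t).2
            · exact le_self_add
            · exact hle _ (hK t).1
            · refine (enorm_fderiv_fourier_sq_le f ξ _).trans ?_
              gcongr
              exact le_add_self
        _ = _ := by ring
    · rw [indicator_of_notMem ht]
      have : deriv (hψ.radial m (𝓕 f) θ) t = 0 := by
        have h : (hψ.radial m (𝓕 f) θ : ℝ → ℂ) =ᶠ[nhds t] fun _ => 0 := by
          filter_upwards [hψ.eventuallyEq_zero ht] with s hs
          simp [hψ.radial_apply, hs]
        rw [h.deriv_eq, deriv_const]
      simp [this]

theorem IsCutoff.measurable_fourier_radial (hψ : IsCutoff ψ) (m : ℝ)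
    {ρ : Metric.sphere (0 : V) 1 → ℝ} (hρ : Measurable ρ) (F : 𝓢(V, ℂ)) :
    Measurable fun q : Metric.sphere (0 : V) 1 × ℝ =>
      𝓕 (hψ.radial m F (ρ q.1 • (q.1 : V))) q.2 := by
  have h : ∀ q : Metric.sphere (0 : V) 1 × ℝ, 𝓕 (hψ.radial m F (ρ q.1 • (q.1 : V))) q.2 =
      ∫ t : ℝ, Complex.exp (↑(-2 * π * t * q.2) * I) •
        ((ψ t : ℂ) * F (t ^ m⁻¹ • ρ q.1 • (q.1 : V))) := by
    intro q
    rw [fourier_coe, Real.fourier_real_eq_integral_exp_smul]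
    rfl
  simp_rw [h]
  have hψm : Measurable ψ := hψ.contDiff.continuous.measurable
  have hF : Measurable F := F.continuous.measurable
  refine StronglyMeasurable.measurable ?_
  refine StronglyMeasurable.integral_prod_right (f := fun (q : Metric.sphere (0 : V) 1 × ℝ) (t : ℝ) =>
    Complex.exp (↑(-2 * π * t * q.2) * I) •
        ((ψ t : ℂ) * F (t ^ m⁻¹ • ρ q.1 • (q.1 : V)))) ?_
  refine Measurable.stronglyMeasurable ?_
  unfold Function.uncurry
  fun_prop

local notation "σ" => Measure.toSphere (volume : Measure V)

theorem IsCutoff.exists_lintegral_fourier_radial_le [Nontrivial V] (hψ : IsCutoff ψ) {m p : ℝ}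
    (hm : 1 ≤ m) (hmd : m < dim) (hp : 0 < p) (hp2 : p < 2) (hpm : p ≤ m)
    {ρ : Metric.sphere (0 : V) 1 → ℝ} (hρ : Measurable ρ) {c c' : ℝ} (hc : 0 < c)
    (hcρ : ∀ ω, c ≤ ρ ω) (hρc : ∀ ω, ρ ω ≤ c') :
    ∃ C : ℝ≥0∞, C ≠ ⊤ ∧ ∀ f : 𝓢(V, ℂ),
      ∫⁻ ω, (∫⁻ y, ENNReal.ofReal (1 + |y| ^ p) *
          ‖𝓕 (hψ.radial m (𝓕 f) (ρ ω • (ω : V))) y‖ₑ ^ 2) ∂σ ≤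
        C * ∫⁻ x, ENNReal.ofReal (‖x‖ ^ m) * ‖f x‖ₑ ^ 2 := by
  obtain ⟨K, hK, hb⟩ := hψ.exists_radial_bound (V := V) hm c'
  obtain ⟨A, hA, hsh⟩ := exists_lintegral_shell_le (V := V) hm hc hcρ
  have hθ : ∀ ω, ‖ρ ω • (ω : V)‖ ≤ c' := fun ω => by
    rw [norm_smul, norm_eq_of_mem_sphere, mul_one, Real.norm_of_nonneg (hc.le.trans (hcρ ω))]
    exact hρc ω
  set D : ℝ≥0∞ := 1 + dim * ENNReal.ofReal (2 * π) ^ 2 with hD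
  have hDt : D ≠ ⊤ := by rw [hD]; finiteness
  have hσ : σ univ ≠ ⊤ := measure_ne_top _ _
  set U : 𝓢(V, ℂ) → Metric.sphere (0 : V) 1 × ℝ → ℂ := fun f q =>
    𝓕 (hψ.radial m (𝓕 f) (ρ q.1 • (q.1 : V))) q.2 with hUdef
  have hU : ∀ f, Measurable (U f) := fun f => hψ.measurable_fourier_radial m hρ (𝓕 f)
  have hprod : ∀ (w : ℝ → ℝ≥0∞) (_ : Measurable w) (f : 𝓢(V, ℂ)),
      ∫⁻ q, w q.2 * ‖U f q‖ₑ ^ 2 ∂(Measure.prod σ volume) =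
        ∫⁻ ω, (∫⁻ y, w y * ‖𝓕 (hψ.radial m (𝓕 f) (ρ ω • (ω : V))) y‖ₑ ^ 2) ∂σ := by
    intro w hw f
    have := hU f
    rw [lintegral_prod _ (by fun_prop)]
  have g0 : ∀ (f : 𝓢(V, ℂ)) ω, ∫⁻ y, ‖𝓕 (hψ.radial m (𝓕 f) (ρ ω • (ω : V))) y‖ₑ ^ 2 ≤
      K * ∫⁻ t in Icc (1 / 2 : ℝ) (3 / 2), ‖𝓕 f (t ^ m⁻¹ • ρ ω • (ω : V))‖ₑ ^ 2 := by
    intro f ω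
    rw [lintegral_enorm_sq_fourier]
    exact (hb f _ (hθ ω)).1
  have g1 : ∀ (f : 𝓢(V, ℂ)) ω, ∫⁻ y, ENNReal.ofReal (y ^ 2) *
        ‖𝓕 (hψ.radial m (𝓕 f) (ρ ω • (ω : V))) y‖ₑ ^ 2 ≤
      K * ∫⁻ t in Icc (1 / 2 : ℝ) (3 / 2), fourierEnergy f (t ^ m⁻¹ • ρ ω • (ω : V)) :=
    fun f ω => (lintegral_sq_mul_enorm_fourier_le _).trans (hb f _ (hθ ω)).2
  have hadd : ∀ f g q, U (f + g) q = U f q + U g q := by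
    intro f g q
    simp only [hUdef]
    rw [FourierTransform.fourier_add (E := 𝓢(V, ℂ)), hψ.radial_add, fourier_add_apply]
  have h0 : ∀ f, ∫⁻ q, ‖U f q‖ₑ ^ 2 ∂(Measure.prod σ volume) ≤ K * A * ∫⁻ x, ‖f x‖ₑ ^ 2 := by
    intro f
    have := hprod (fun _ => 1) measurable_const f
    simp only [one_mul] at this
    rw [this]
    refine (lintegral_mono fun ω => g0 f ω).trans ?_
    rw [lintegral_const_mul' _ _ hK, mul_assoc, ← lintegral_enorm_sq_fourier f]
    gcongr
    exact hsh (fun ξ => ‖𝓕 f ξ‖ₑ ^ 2) ((𝓕 f).continuous.measurable.enorm.pow_const 2)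
  have h1 : ∀ f, ∫⁻ q, ENNReal.ofReal (|q.2| ^ 2) * ‖U f q‖ₑ ^ 2 ∂(Measure.prod σ volume) ≤
      K * (A * D) * ∫⁻ x, ENNReal.ofReal (1 + ‖x‖ ^ 2) * ‖f x‖ₑ ^ 2 := by
    intro f
    simp only [sq_abs]
    rw [hprod (fun y => ENNReal.ofReal (y ^ 2)) (by fun_prop)]
    refine (lintegral_mono fun ω => g1 f ω).trans ?_
    rw [lintegral_const_mul' _ _ hK, mul_assoc, mul_assoc]
    gcongr
    refine (hsh _ (measurable_fourierEnergy f)).trans ?_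
    gcongr
    exact lintegral_fourierEnergy_le f
  have h2 : ∀ f, ∫⁻ q, ENNReal.ofReal (1 + |q.2| ^ 2) * ‖U f q‖ₑ ^ 2 ∂(Measure.prod σ volume) ≤
      2 * (K * D) * σ univ * (∫⁻ x, ENNReal.ofReal (1 + ‖x‖) * ‖f x‖ₑ) ^ 2 := by
    intro f
    simp only [sq_abs]
    rw [hprod (fun y => ENNReal.ofReal (1 + y ^ 2)) (by fun_prop)]
    set N := (∫⁻ x, ENNReal.ofReal (1 + ‖x‖) * ‖f x‖ₑ) ^ 2
    have hN : ∀ θ : V, ∫⁻ t in Icc (1 / 2 : ℝ) (3 / 2), fourierEnergy f (t ^ m⁻¹ • θ) ≤ D * N := by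
      intro θ
      refine (lintegral_mono fun t => fourierEnergy_le f _).trans (le_of_eq ?_)
      rw [setLIntegral_const, Real.volume_Icc, show (3 / 2 - 1 / 2 : ℝ) = 1 by norm_num,
        ENNReal.ofReal_one, mul_one]
    have hN' : ∀ θ : V, ∫⁻ t in Icc (1 / 2 : ℝ) (3 / 2), ‖𝓕 f (t ^ m⁻¹ • θ)‖ₑ ^ 2 ≤ D * N :=
      fun θ => (lintegral_mono fun t => le_self_add).trans (hN θ)
    calc _ ≤ ∫⁻ _ : Metric.sphere (0 : V) 1, 2 * (K * D) * N ∂σ := by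
          refine lintegral_mono fun ω => ?_
          set w := 𝓕 (hψ.radial m (𝓕 f) (ρ ω • (ω : V)))
          have mw : Measurable w := w.continuous.measurable
          calc _ = ∫⁻ y, (‖w y‖ₑ ^ 2 + ENNReal.ofReal (y ^ 2) * ‖w y‖ₑ ^ 2) := by
                refine lintegral_congr fun y => ?_
                rw [ENNReal.ofReal_add (by norm_num) (by positivity), add_mul]
                simp
            _ = (∫⁻ y, ‖w y‖ₑ ^ 2) + ∫⁻ y, ENNReal.ofReal (y ^ 2) * ‖w y‖ₑ ^ 2 :=
                lintegral_add_left (by fun_prop) _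
            _ ≤ K * (D * N) + K * (D * N) := by
                gcongr
                · exact (g0 f ω).trans (mul_le_mul_right (hN' _) _)
                · exact (g1 f ω).trans (mul_le_mul_right (hN _) _)
            _ = _ := by ring
      _ = _ := by rw [lintegral_const]; ring
  obtain ⟨C, hC, h⟩ := exists_lintegral_one_add_rpow_le (μ := Measure.prod σ volume)
    (Y := fun q => |q.2|) (by fun_prop) (fun q => abs_nonneg _) hU hadd
    (by finiteness) (by finiteness) (by finiteness) h0 h1 h2 hp hp2 hpm hmd
  refine ⟨C, hC, fun f => ?_⟩
  rw [← hprod (fun y => ENNReal.ofReal (1 + |y| ^ p)) (by fun_prop)]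
  exact h f
end radial

end Radial

section Resolvent

open SchwartzMap FourierTransform Set
open scoped ENNReal NNReal

theorem norm_inv_sub_ofReal_le {ζ : ℂ} (hζ : ζ.im ≠ 0) (t : ℝ) : ‖(ζ - t)⁻¹‖ ≤ |ζ.im|⁻¹ := by
  rw [norm_inv]
  refine inv_anti₀ (abs_pos.2 hζ) ?_
  simpa using Complex.abs_im_le_norm (ζ - t)

/-- A bump function equal to one on `[3/4, 5/4]` and supported in `[1/2, 3/2]`. -/
def unitBump : ContDiffBump (1 : ℝ) := ⟨1 / 4, 1 / 2, by norm_num, by norm_num⟩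

theorem support_unitBump_subset : Function.support unitBump ⊆ Icc (1 / 2 : ℝ) (3 / 2) := by
  rw [unitBump.support_eq]
  intro t ht
  have : |t - 1| < 1 / 2 := ht
  rw [abs_lt] at this
  constructor <;> linarith [this.1, this.2]

theorem isCutoff_unitBump : IsCutoff unitBump := ⟨unitBump.contDiff, support_unitBump_subset⟩

theorem isCutoff_unitBump_mul_rpow (κ s : ℝ) : IsCutoff fun t => unitBump t * (κ * t ^ s) := by
  constructor
  · rw [contDiff_iff_contDiffAt]
    intro t
    by_cases ht : t ∈ Icc (1 / 2 : ℝ) (3 / 2)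
    · have ht0 : t ≠ 0 := by have := ht.1; intro h; norm_num [h] at this
      exact unitBump.contDiff.contDiffAt.mul
        (contDiffAt_const.mul (contDiffAt_id.rpow_const_of_ne ht0))
    · refine (contDiffAt_const (c := (0 : ℝ))).congr_of_eventuallyEq ?_
      filter_upwards [isCutoff_unitBump.eventuallyEq_zero ht] with s hs
      simp [hs]
  · exact (Function.support_mul_subset_left _ _).trans support_unitBump_subset

theorem norm_one_sub_unitBump_mul_inv_sub_le {ζ : ℂ} (hζ : ‖ζ‖ = 1) {t : ℝ} (ht : 0 < t) :
    ‖((1 - unitBump t ^ 2 : ℝ) : ℂ) * (ζ - t)⁻¹‖ ≤ 5 * t⁻¹ := by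
  by_cases h : |t - 1| ≤ 1 / 4
  · rw [unitBump.one_of_mem_closedBall (by rw [Metric.mem_closedBall, Real.dist_eq]; exact h)]
    simp only [one_pow, sub_self, ofReal_zero, zero_mul, norm_zero]
    positivity
  · have h1 : |t - 1| ≤ ‖ζ - t‖ := by
      have := abs_norm_sub_norm_le (t : ℂ) ζ
      rwa [hζ, Complex.norm_real, Real.norm_of_nonneg ht.le, norm_sub_rev] at this
    have h2 : t / 5 ≤ |t - 1| := by
      rcases le_total 1 t with h' | h'
      · rw [abs_of_nonneg (by linarith)] at h ⊢; linarith
      · rw [abs_of_nonpos (by linarith)] at h ⊢; linarith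
    have h3 : ‖((1 - unitBump t ^ 2 : ℝ) : ℂ)‖ ≤ 1 := by
      rw [Complex.norm_real, Real.norm_eq_abs, abs_le]
      have := unitBump.nonneg (x := t)
      have := unitBump.le_one (x := t)
      constructor <;> nlinarith
    rw [norm_mul, norm_inv]
    calc _ ≤ 1 * (t / 5)⁻¹ := by
          gcongr
          exact h2.trans h1
      _ = _ := by field_simp

variable {V : Type*} [NormedAddCommGroup V] [InnerProductSpace ℝ V] [FiniteDimensional ℝ V]

theorem exists_bounds_on_sphere [Nontrivial V] {a : V → ℝ} (ha : Continuous a)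
    (hpos : ∀ ξ, ξ ≠ 0 → 0 < a ξ) :
    ∃ c c' : ℝ, 0 < c ∧ ∀ ω : Metric.sphere (0 : V) 1, c ≤ a ω ∧ a ω ≤ c' := by
  have hK : IsCompact (Metric.sphere (0 : V) 1) := isCompact_sphere _ _
  have hne : (Metric.sphere (0 : V) 1).Nonempty := NormedSpace.sphere_nonempty.2 zero_le_one
  obtain ⟨x, hx, hmin⟩ := hK.exists_isMinOn hne ha.continuousOn
  obtain ⟨y, hy, hmax⟩ := hK.exists_isMaxOn hne ha.continuousOn
  refine ⟨a x, a y, hpos x ?_, fun ω => ⟨hmin ω.2, hmax ω.2⟩⟩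
  exact ne_zero_of_mem_unit_sphere ⟨x, hx⟩

variable [MeasurableSpace V] [BorelSpace V] {a : V → ℝ} {m : ℝ}
local notation "σ" => Measure.toSphere (volume : Measure V)
local notation "dim" => Module.finrank ℝ V

theorem integrable_mul_fourier_mul_conj {q : V → ℂ} (hq : Measurable q) {B : ℝ}
    (hB : ∀ ξ, ‖q ξ‖ ≤ B) (f g : 𝓢(V, ℂ)) :
    Integrable fun ξ => q ξ * (𝓕 f ξ * (starRingEnd ℂ) (𝓕 g ξ)) := by
  obtain ⟨D, hD⟩ : ∃ D, ∀ ξ, ‖𝓕 g ξ‖ ≤ D := by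
    obtain ⟨D, -, hD⟩ := (𝓕 g).decay 0 0
    exact ⟨D, fun ξ => by simpa using hD ξ⟩
  refine Integrable.bdd_mul (c := B) ?_ hq.aestronglyMeasurable (ae_of_all _ hB)
  refine (𝓕 f).integrable.mul_bdd (c := D) ?_ (ae_of_all _ fun ξ => by simpa using hD ξ)
  exact (Complex.continuous_conj.comp (𝓕 g).continuous).aestronglyMeasurable

/-- The part of the form away from the characteristic variety. -/
theorem exists_outer_bound [Nontrivial V] (hm : 0 < m) (hmd : m < dim)
    {c : ℝ} (hc : 0 < c) (hca : ∀ ξ, c * ‖ξ‖ ≤ a ξ) :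
    ∃ C : ℝ≥0∞, C ≠ ⊤ ∧ ∀ ζ : ℂ, ‖ζ‖ = 1 → ∀ f g : 𝓢(V, ℂ),
      ‖∫ ξ, ((1 - unitBump (a ξ ^ m) ^ 2 : ℝ) : ℂ) * (ζ - (a ξ ^ m : ℝ))⁻¹ *
        (𝓕 f ξ * (starRingEnd ℂ) (𝓕 g ξ))‖ₑ ^ 2 ≤
        C * ((∫⁻ x, ENNReal.ofReal (‖x‖ ^ m) * ‖f x‖ₑ ^ 2) *
          ∫⁻ x, ENNReal.ofReal (‖x‖ ^ m) * ‖g x‖ₑ ^ 2) := by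
  obtain ⟨P, hP, hpitt⟩ := exists_pitt (V := V) hm hmd
  refine ⟨ENNReal.ofReal (5 * (c ^ m)⁻¹) ^ 2 * P ^ 2, by finiteness, fun ζ hζ f g => ?_⟩
  have h0 : ∀ᵐ x : V, x ≠ 0 := by simp [ae_iff]
  have mF := (𝓕 f).continuous.measurable
  have mG := (𝓕 g).continuous.measurable
  have h1 : ‖∫ ξ, ((1 - unitBump (a ξ ^ m) ^ 2 : ℝ) : ℂ) * (ζ - (a ξ ^ m : ℝ))⁻¹ *
        (𝓕 f ξ * (starRingEnd ℂ) (𝓕 g ξ))‖ₑ ≤ ENNReal.ofReal (5 * (c ^ m)⁻¹) *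
      ∫⁻ ξ, (ENNReal.ofReal (‖ξ‖ ^ (-m / 2)) * ‖𝓕 f ξ‖ₑ) *
        (ENNReal.ofReal (‖ξ‖ ^ (-m / 2)) * ‖𝓕 g ξ‖ₑ) := by
    refine (enorm_integral_le_lintegral_enorm _).trans ?_
    rw [← lintegral_const_mul' _ _ (by finiteness)]
    refine lintegral_mono_ae ?_
    filter_upwards [h0] with ξ hξ
    have hx : 0 < ‖ξ‖ := norm_pos_iff.2 hξ
    have ha0 : 0 < a ξ := lt_of_lt_of_le (by positivity) (hca ξ)
    rw [enorm_mul, enorm_mul (𝓕 f ξ), RCLike.enorm_conj]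
    have hle : ‖((1 - unitBump (a ξ ^ m) ^ 2 : ℝ) : ℂ) * (ζ - (a ξ ^ m : ℝ))⁻¹‖ₑ ≤
        ENNReal.ofReal (5 * (c ^ m)⁻¹) *
          (ENNReal.ofReal (‖ξ‖ ^ (-m / 2)) * ENNReal.ofReal (‖ξ‖ ^ (-m / 2))) := by
      rw [← ENNReal.ofReal_mul (by positivity), ← ENNReal.ofReal_mul (by positivity),
        ← rpow_add hx, show -m / 2 + -m / 2 = -m by ring, ← ofReal_norm]
      refine ENNReal.ofReal_le_ofReal
        ((norm_one_sub_unitBump_mul_inv_sub_le hζ (by positivity)).trans ?_)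
      rw [mul_assoc, rpow_neg hx.le, ← mul_inv, ← mul_rpow hc.le hx.le]
      gcongr
      exact hca ξ
    calc _ ≤ _ := mul_le_mul_left hle _
      _ = _ := by ring
  have hsq : ∀ h : 𝓢(V, ℂ), ∫⁻ ξ, (ENNReal.ofReal (‖ξ‖ ^ (-m / 2)) * ‖𝓕 h ξ‖ₑ) ^ 2 ≤
      P * ∫⁻ x, ENNReal.ofReal (‖x‖ ^ m) * ‖h x‖ₑ ^ 2 := by
    intro h
    refine le_trans (le_of_eq (lintegral_congr fun ξ => ?_)) (hpitt h)
    rw [mul_pow, ← ENNReal.ofReal_pow (by positivity), ← rpow_natCast,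
      ← rpow_mul (norm_nonneg _), show -m / 2 * ((2 : ℕ) : ℝ) = -m by push_cast; ring]
  calc _ ≤ _ := pow_le_pow_left' h1 2
    _ ≤ ENNReal.ofReal (5 * (c ^ m)⁻¹) ^ 2 *
        ((P * ∫⁻ x, ENNReal.ofReal (‖x‖ ^ m) * ‖f x‖ₑ ^ 2) *
          (P * ∫⁻ x, ENNReal.ofReal (‖x‖ ^ m) * ‖g x‖ₑ ^ 2)) := by
        rw [mul_pow]
        refine mul_le_mul_right ((sq_lintegral_mul_le _ (by fun_prop) (by fun_prop)).trans ?_) _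
        exact mul_le_mul' (hsq f) (hsq g)
    _ = _ := by ring

/-- Polar coordinates adapted to the level sets of `a`. -/
theorem integral_shell_eq [Nontrivial V] (hm : 0 < m) (ha : Measurable a)
    (hhom : ∀ t : ℝ, 0 < t → ∀ ξ, a (t • ξ) = t * a ξ) (hpos : ∀ ξ, ξ ≠ 0 → 0 < a ξ)
    {ζ : ℂ} (hζ : ζ.im ≠ 0) (f g : 𝓢(V, ℂ)) :
    ∫ ξ, ((unitBump (a ξ ^ m) ^ 2 : ℝ) : ℂ) * (ζ - (a ξ ^ m : ℝ))⁻¹ *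
        (𝓕 f ξ * (starRingEnd ℂ) (𝓕 g ξ)) =
      ∫ ω : Metric.sphere (0 : V) 1, ((((a ω)⁻¹ ^ dim : ℝ) : ℂ) * ∫ t : ℝ,
        isCutoff_unitBump.radial m (𝓕 f) ((a ω)⁻¹ • (ω : V)) t *
        (starRingEnd ℂ) ((isCutoff_unitBump_mul_rpow m⁻¹ (dim / m - 1)).radial m (𝓕 g)
          ((a ω)⁻¹ • (ω : V)) t) * (ζ - t)⁻¹) ∂σ := by
  have hb : Measurable unitBump := unitBump.continuous.measurable
  have hInt : Integrable fun ξ => ((unitBump (a ξ ^ m) ^ 2 : ℝ) : ℂ) * (ζ - (a ξ ^ m : ℝ))⁻¹ *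
      (𝓕 f ξ * (starRingEnd ℂ) (𝓕 g ξ)) := by
    refine integrable_mul_fourier_mul_conj (by fun_prop) (B := 1 * |ζ.im|⁻¹) (fun ξ => ?_) f g
    rw [norm_mul]
    refine mul_le_mul ?_ (norm_inv_sub_ofReal_le hζ _) (norm_nonneg _) zero_le_one
    rw [Complex.norm_real, norm_pow, Real.norm_of_nonneg unitBump.nonneg]
    exact pow_le_one₀ unitBump.nonneg unitBump.le_one
  rw [integral_polar hInt]
  refine integral_congr_ae (ae_of_all _ fun ω => ?_)
  have hω : 0 < a ω := hpos _ (ne_zero_of_mem_unit_sphere ω)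
  simp only
  rw [integral_Ioi_comp_mul_rpow_inv hm (inv_pos.2 hω), ← integral_const_mul]
  refine Eq.trans ?_ (setIntegral_eq_integral_of_forall_compl_eq_zero (s := Ioi (0 : ℝ)) ?_)
  · refine setIntegral_congr_fun (measurableSet_Ioi (a := (0 : ℝ))) fun t ht => ?_
    have ht : 0 < t := ht
    have hat : a (((a ω)⁻¹ * t ^ m⁻¹) • (ω : V)) ^ m = t := by
      rw [hhom _ (by positivity), mul_assoc, mul_comm, mul_assoc, mul_inv_cancel₀ hω.ne', mul_one,
        rpow_inv_rpow ht.le hm.ne']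
    simp only [hat, IsCutoff.radial_apply, smul_smul, mul_comm (t ^ m⁻¹) (a ω)⁻¹, map_mul,
      conj_ofReal, real_smul]
    have hpow : (a ω)⁻¹ * (m⁻¹ * t ^ (m⁻¹ - 1)) * ((a ω)⁻¹ * t ^ m⁻¹) ^ (dim - 1) =
        (a ω)⁻¹ ^ dim * (m⁻¹ * t ^ (dim / m - 1)) := by
      have hd : 1 ≤ dim := Module.finrank_pos
      have h1 : (t ^ m⁻¹) ^ (dim - 1) * t ^ (m⁻¹ - 1) = t ^ (dim / m - 1) := by
        rw [← rpow_natCast, ← rpow_mul ht.le, ← rpow_add ht]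
        congr 1
        rw [Nat.cast_sub hd]
        push_cast
        field_simp
        ring
      obtain ⟨k, hk⟩ : ∃ k, dim = k + 1 := ⟨dim - 1, by omega⟩
      rw [← h1, mul_pow, show (a ω)⁻¹ ^ dim = (a ω)⁻¹ ^ (dim - 1) * (a ω)⁻¹ by
        rw [hk, pow_succ, Nat.add_sub_cancel]]
      ring
    rw [← mul_assoc, ← ofReal_mul, hpow]
    push_cast
    ring
  · intro t ht
    have : unitBump t = 0 := isCutoff_unitBump.eq_zero fun h =>
      ht (lt_of_lt_of_le (by norm_num : (0 : ℝ) < 1 / 2) h.1)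
    simp [IsCutoff.radial_apply, this]

/-- The part of the form near the characteristic variety. -/
theorem exists_shell_bound [Nontrivial V] (hm : 1 < m) (hmd : m < dim) (ha : Continuous a)
    (hhom : ∀ t : ℝ, 0 < t → ∀ ξ, a (t • ξ) = t * a ξ) (hpos : ∀ ξ, ξ ≠ 0 → 0 < a ξ) :
    ∃ C : ℝ≥0∞, C ≠ ⊤ ∧ ∀ ζ : ℂ, ζ.im ≠ 0 → ∀ f g : 𝓢(V, ℂ),
      ‖∫ ξ, ((unitBump (a ξ ^ m) ^ 2 : ℝ) : ℂ) * (ζ - (a ξ ^ m : ℝ))⁻¹ *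
        (𝓕 f ξ * (starRingEnd ℂ) (𝓕 g ξ))‖ₑ ^ 2 ≤
        C * ((∫⁻ x, ENNReal.ofReal (‖x‖ ^ m) * ‖f x‖ₑ ^ 2) *
          ∫⁻ x, ENNReal.ofReal (‖x‖ ^ m) * ‖g x‖ₑ ^ 2) := by
  obtain ⟨c, c', hc, hcc⟩ := exists_bounds_on_sphere ha hpos
  have hc' : 0 < c' := by
    obtain ⟨x, hx⟩ : (Metric.sphere (0 : V) 1).Nonempty := NormedSpace.sphere_nonempty.2 zero_le_one
    exact hc.trans_le ((hcc ⟨x, hx⟩).1.trans (hcc ⟨x, hx⟩).2)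
  have hm0 : 0 < m := by linarith
  obtain ⟨p, hp1, hp2⟩ := exists_between (lt_min hm one_lt_two)
  obtain ⟨hpm, hp2⟩ := lt_min_iff.1 hp2
  set ρ : Metric.sphere (0 : V) 1 → ℝ := fun ω => (a ω)⁻¹ with hρdef
  have hρ : Measurable ρ := (ha.measurable.comp measurable_subtype_coe).inv
  have hρ1 : ∀ ω, c'⁻¹ ≤ ρ ω := fun ω => inv_anti₀ (hc.trans_le (hcc ω).1) (hcc ω).2
  have hρ2 : ∀ ω, ρ ω ≤ c⁻¹ := fun ω => inv_anti₀ hc (hcc ω).1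
  have hψ := isCutoff_unitBump
  have hφ := isCutoff_unitBump_mul_rpow m⁻¹ (dim / m - 1)
  obtain ⟨B, hB, hB'⟩ := exists_sq_lintegral_enorm_le hp1
  obtain ⟨C₁, hC1, h1⟩ := hψ.exists_lintegral_fourier_radial_le (V := V) hm.le hmd (by linarith) hp2
    hpm.le hρ (inv_pos.2 hc') hρ1 hρ2
  obtain ⟨C₂, hC2, h2⟩ := hφ.exists_lintegral_fourier_radial_le (V := V) hm.le hmd (by linarith) hp2
    hpm.le hρ (inv_pos.2 hc') hρ1 hρ2
  refine ⟨(ENNReal.ofReal (c⁻¹ ^ dim) * ENNReal.ofReal (2 * π)) ^ 2 * (B * C₁ * (B * C₂)),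
    by finiteness, fun ζ hζ f g => ?_⟩
  have mN : ∀ {ψ : ℝ → ℝ} (hψ : IsCutoff ψ) (f : 𝓢(V, ℂ)),
      Measurable fun ω => ∫⁻ y, ‖𝓕 (hψ.radial m (𝓕 f) (ρ ω • (ω : V))) y‖ₑ := by
    intro ψ hψ f
    exact ((hψ.measurable_fourier_radial m hρ (𝓕 f)).enorm).lintegral_prod_right'
  have hN : ∀ {ψ : ℝ → ℝ} (hψ : IsCutoff ψ) (f : 𝓢(V, ℂ)),
      ∫⁻ ω, (∫⁻ y, ‖𝓕 (hψ.radial m (𝓕 f) (ρ ω • (ω : V))) y‖ₑ) ^ 2 ∂σ ≤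
        B * ∫⁻ ω, (∫⁻ y, ENNReal.ofReal (1 + |y| ^ p) *
          ‖𝓕 (hψ.radial m (𝓕 f) (ρ ω • (ω : V))) y‖ₑ ^ 2) ∂σ := by
    intro ψ hψ f
    rw [← lintegral_const_mul' _ _ hB]
    exact lintegral_mono fun ω => hB' _ (SchwartzMap.continuous _).measurable
  rw [integral_shell_eq hm0 ha.measurable hhom hpos hζ]
  have key := (enorm_integral_le_lintegral_enorm (μ := σ) (fun ω : Metric.sphere (0 : V) 1 =>
      (((a ω)⁻¹ ^ dim : ℝ) : ℂ) * ∫ t : ℝ,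
        isCutoff_unitBump.radial m (𝓕 f) ((a ω)⁻¹ • (ω : V)) t *
        (starRingEnd ℂ) ((isCutoff_unitBump_mul_rpow m⁻¹ (dim / m - 1)).radial m (𝓕 g)
          ((a ω)⁻¹ • (ω : V)) t) * (ζ - t)⁻¹)).trans
    (lintegral_mono (g := fun ω => ENNReal.ofReal (c⁻¹ ^ dim) * ENNReal.ofReal (2 * π) *
      ((∫⁻ y, ‖𝓕 (hψ.radial m (𝓕 f) (ρ ω • (ω : V))) y‖ₑ) *
        ∫⁻ y, ‖𝓕 (hφ.radial m (𝓕 g) (ρ ω • (ω : V))) y‖ₑ)) fun ω => by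
      simp only
      rw [enorm_mul, mul_assoc]
      refine mul_le_mul' ?_ (enorm_integral_mul_conj_mul_inv_sub_le _ _ hζ)
      have h0 : 0 ≤ (a ω)⁻¹ := (inv_pos.2 hc').le.trans (hρ1 ω)
      rw [← ofReal_norm, Complex.norm_real, Real.norm_of_nonneg (by positivity)]
      exact ENNReal.ofReal_le_ofReal (pow_le_pow_left₀ h0 (hρ2 ω) _))
  rw [lintegral_const_mul' _ _ (by finiteness)] at key
  calc _ ≤ _ := pow_le_pow_left' key 2
    _ ≤ (ENNReal.ofReal (c⁻¹ ^ dim) * ENNReal.ofReal (2 * π)) ^ 2 *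
        ((B * (C₁ * ∫⁻ x, ENNReal.ofReal (‖x‖ ^ m) * ‖f x‖ₑ ^ 2)) *
          (B * (C₂ * ∫⁻ x, ENNReal.ofReal (‖x‖ ^ m) * ‖g x‖ₑ ^ 2))) := by
        rw [mul_pow]
        refine mul_le_mul_right ((sq_lintegral_mul_le _ (mN hψ f).aemeasurable
          (mN hφ g).aemeasurable).trans ?_) _
        exact mul_le_mul' ((hN hψ f).trans (mul_le_mul_right (h1 f) _))
          ((hN hφ g).trans (mul_le_mul_right (h2 g) _))
    _ = _ := by ring

/-- The uniform resolvent estimate on the unit circle of spectral parameters. -/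
theorem exists_resolvent_bound [Nontrivial V] (hm : 1 < m) (hmd : m < dim) (ha : Continuous a)
    (hhom : ∀ t : ℝ, 0 < t → ∀ ξ, a (t • ξ) = t * a ξ) (hpos : ∀ ξ, ξ ≠ 0 → 0 < a ξ) :
    ∃ C : ℝ≥0∞, C ≠ ⊤ ∧ ∀ ζ : ℂ, ζ.im ≠ 0 → ‖ζ‖ = 1 → ∀ f g : 𝓢(V, ℂ),
      ‖∫ ξ, (ζ - (a ξ ^ m : ℝ))⁻¹ * (𝓕 f ξ * (starRingEnd ℂ) (𝓕 g ξ))‖ₑ ^ 2 ≤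
        C * ((∫⁻ x, ENNReal.ofReal (‖x‖ ^ m) * ‖f x‖ₑ ^ 2) *
          ∫⁻ x, ENNReal.ofReal (‖x‖ ^ m) * ‖g x‖ₑ ^ 2) := by
  obtain ⟨c, c', hc, hcc⟩ := exists_bounds_on_sphere ha hpos
  have hca : ∀ ξ, c * ‖ξ‖ ≤ a ξ := by
    intro ξ
    rcases eq_or_ne ξ 0 with rfl | hξ
    · have h := hhom 2 two_pos 0
      rw [smul_zero] at h
      rw [norm_zero, mul_zero]
      linarith
    · have hx : 0 < ‖ξ‖ := norm_pos_iff.2 hξ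
      have h := (hcc ⟨‖ξ‖⁻¹ • ξ, by simp [norm_smul, hx.ne']⟩).1
      rw [hhom _ (inv_pos.2 hx), inv_mul_eq_div, le_div_iff₀ hx] at h
      exact h
  obtain ⟨C₁, hC1, h1⟩ := exists_outer_bound (by linarith) hmd hc hca
  obtain ⟨C₂, hC2, h2⟩ := exists_shell_bound hm hmd ha hhom hpos
  refine ⟨2 * C₁ + 2 * C₂, by finiteness, fun ζ hζ hζ1 f g => ?_⟩
  have hb : Measurable unitBump := unitBump.continuous.measurable
  have ham := ha.measurable
  have hs : ∀ t : ℝ, 0 ≤ unitBump t ^ 2 ∧ unitBump t ^ 2 ≤ 1 := fun t =>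
    ⟨sq_nonneg _, pow_le_one₀ unitBump.nonneg unitBump.le_one⟩
  have hInt : ∀ k : ℝ → ℝ, Measurable k → (∀ t, 0 ≤ k t ∧ k t ≤ 1) →
      Integrable fun ξ => ((k (a ξ ^ m) : ℝ) : ℂ) * (ζ - (a ξ ^ m : ℝ))⁻¹ *
        (𝓕 f ξ * (starRingEnd ℂ) (𝓕 g ξ)) := by
    intro k hk hk1
    refine integrable_mul_fourier_mul_conj (by fun_prop) (B := 1 * |ζ.im|⁻¹) (fun ξ => ?_) f g
    rw [norm_mul]
    refine mul_le_mul ?_ (norm_inv_sub_ofReal_le hζ _) (norm_nonneg _) zero_le_one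
    rw [Complex.norm_real, Real.norm_of_nonneg (hk1 _).1]
    exact (hk1 _).2
  have hsplit : ∫ ξ, (ζ - (a ξ ^ m : ℝ))⁻¹ * (𝓕 f ξ * (starRingEnd ℂ) (𝓕 g ξ)) =
      (∫ ξ, ((1 - unitBump (a ξ ^ m) ^ 2 : ℝ) : ℂ) * (ζ - (a ξ ^ m : ℝ))⁻¹ *
        (𝓕 f ξ * (starRingEnd ℂ) (𝓕 g ξ))) +
      ∫ ξ, ((unitBump (a ξ ^ m) ^ 2 : ℝ) : ℂ) * (ζ - (a ξ ^ m : ℝ))⁻¹ *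
        (𝓕 f ξ * (starRingEnd ℂ) (𝓕 g ξ)) := by
    rw [← integral_add (hInt (fun t => 1 - unitBump t ^ 2) (by fun_prop)
      fun t => ⟨by linarith [(hs t).2], by linarith [(hs t).1]⟩)
      (hInt (fun t => unitBump t ^ 2) (by fun_prop) hs)]
    congr 1
    refine funext fun ξ => ?_
    push_cast
    ring
  rw [hsplit]
  refine (enorm_add_sq_le _ _).trans ?_
  rw [add_mul, mul_assoc 2, mul_assoc 2]
  exact add_le_add (mul_le_mul_right (h1 ζ hζ1 f g) _) (mul_le_mul_right (h2 ζ hζ f g) _)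

end Resolvent

section Dilation

open SchwartzMap FourierTransform Set
open scoped ENNReal NNReal


variable {V : Type*} [NormedAddCommGroup V] [InnerProductSpace ℝ V]
local notation "dim" => Module.finrank ℝ V

/-- The dilation `x ↦ f (l⁻¹ • x)` of a Schwartz function. -/
def schwartzDilation {l : ℝ} (hl : l ≠ 0) (f : 𝓢(V, ℂ)) : 𝓢(V, ℂ) :=
  compCLMOfContinuousLinearEquiv ℝ (ContinuousLinearEquiv.smulLeft (Units.mk0 l⁻¹ (inv_ne_zero hl))) f

theorem schwartzDilation_apply {l : ℝ} (hl : l ≠ 0) (f : 𝓢(V, ℂ)) (x : V) :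
    schwartzDilation hl f x = f (l⁻¹ • x) := by
  simp [schwartzDilation, Units.smul_def]

variable [FiniteDimensional ℝ V] [MeasurableSpace V] [BorelSpace V]

theorem fourier_schwartzDilation {l : ℝ} (hl : 0 < l) (f : 𝓢(V, ℂ)) (ξ : V) :
    𝓕 (schwartzDilation hl.ne' f) ξ = (l ^ dim : ℝ) • 𝓕 f (l • ξ) := by
  rw [fourier_coe, fourier_coe, Real.fourier_eq', Real.fourier_eq']
  have := Measure.integral_comp_smul_of_nonneg (volume : Measure V)
    (fun v => Complex.exp (↑(-2 * π * ⟪v, l • ξ⟫) * Complex.I) • f v) l⁻¹ (hR := by positivity)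
  rw [inv_pow, inv_inv] at this
  rw [← this]
  refine integral_congr_ae (ae_of_all _ fun v => ?_)
  simp only [schwartzDilation_apply]
  rw [inner_smul_left, inner_smul_right]
  simp [hl.ne']

theorem lintegral_comp_inv_smul {l : ℝ} (hl : 0 < l) {H : V → ℝ≥0∞} (hH : Measurable H) :
    ∫⁻ x, H (l⁻¹ • x) = ENNReal.ofReal (l ^ dim) * ∫⁻ x, H x := by
  rw [← lintegral_map (μ := volume) hH (measurable_const_smul l⁻¹),
    Measure.map_addHaar_smul _ (inv_ne_zero hl.ne'), lintegral_smul_measure, smul_eq_mul,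
    inv_pow, inv_inv, abs_of_pos (by positivity)]

theorem lintegral_norm_rpow_mul_schwartzDilation {l m : ℝ} (hl : 0 < l) (f : 𝓢(V, ℂ)) :
    ∫⁻ x, ENNReal.ofReal (‖x‖ ^ m) * ‖schwartzDilation hl.ne' f x‖ₑ ^ 2 =
      ENNReal.ofReal (l ^ dim * l ^ m) * ∫⁻ x, ENNReal.ofReal (‖x‖ ^ m) * ‖f x‖ₑ ^ 2 := by
  have hf := f.continuous.measurable
  rw [ENNReal.ofReal_mul (by positivity), mul_assoc, ← lintegral_const_mul _ (by fun_prop),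
    ← lintegral_comp_inv_smul hl (by fun_prop)]
  refine lintegral_congr fun x => ?_
  rw [schwartzDilation_apply, ← mul_assoc, ← ENNReal.ofReal_mul (by positivity), norm_smul,
    ← mul_rpow hl.le (by positivity), Real.norm_of_nonneg (by positivity),
    mul_inv_cancel_left₀ hl.ne']

/-- The bound for the resolvent form on the Fourier side, uniformly in the spectral parameter. -/
theorem exists_resolvent_bound_of_im_ne_zero [Nontrivial V] {a : V → ℝ} {m : ℝ} (hm : 1 < m)
    (hmd : m < dim) (ha : Continuous a) (hhom : ∀ t : ℝ, 0 < t → ∀ ξ, a (t • ξ) = t * a ξ)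
    (hpos : ∀ ξ, ξ ≠ 0 → 0 < a ξ) :
    ∃ C : ℝ≥0∞, C ≠ ⊤ ∧ ∀ ζ : ℂ, ζ.im ≠ 0 → ∀ f g : 𝓢(V, ℂ),
      ‖∫ ξ, (ζ - (a ξ ^ m : ℝ))⁻¹ * (𝓕 f ξ * (starRingEnd ℂ) (𝓕 g ξ))‖ₑ ^ 2 ≤
        C * ((∫⁻ x, ENNReal.ofReal (‖x‖ ^ m) * ‖f x‖ₑ ^ 2) *
          ∫⁻ x, ENNReal.ofReal (‖x‖ ^ m) * ‖g x‖ₑ ^ 2) := by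
  obtain ⟨C, hC, hbound⟩ := exists_resolvent_bound hm hmd ha hhom hpos
  refine ⟨C, hC, fun ζ hζ f g => ?_⟩
  have hζ0 : 0 < ‖ζ‖ := norm_pos_iff.2 fun h => hζ (by simp [h])
  obtain ⟨l, hl, hlm⟩ : ∃ l : ℝ, 0 < l ∧ l ^ m = ‖ζ‖ :=
    ⟨‖ζ‖ ^ m⁻¹, by positivity, rpow_inv_rpow hζ0.le (by linarith)⟩
  have hlm0 : 0 < l ^ m := by positivity
  have ha0 : ∀ ξ, 0 ≤ a ξ := by
    intro ξ
    rcases eq_or_ne ξ 0 with rfl | h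
    · have := hhom 2 two_pos 0
      rw [smul_zero] at this
      linarith
    · exact (hpos ξ h).le
  set K : ℝ := (l ^ dim * l ^ m)⁻¹ with hK
  have hscale : ∫ ξ, (ζ - (a ξ ^ m : ℝ))⁻¹ * (𝓕 f ξ * (starRingEnd ℂ) (𝓕 g ξ)) =
      K • ∫ ξ, (ζ / (l ^ m : ℝ) - (a ξ ^ m : ℝ))⁻¹ *
        (𝓕 (schwartzDilation hl.ne' f) ξ *
          (starRingEnd ℂ) (𝓕 (schwartzDilation hl.ne' g) ξ)) := by
    have h := Measure.integral_comp_smul_of_nonneg (volume : Measure V)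
      (fun ξ => (ζ - (a ξ ^ m : ℝ))⁻¹ * (𝓕 f ξ * (starRingEnd ℂ) (𝓕 g ξ))) l (hR := hl.le)
    rw [eq_inv_smul_iff₀ (by positivity)] at h
    rw [← h, ← integral_smul, ← integral_smul]
    refine integral_congr_ae (ae_of_all _ fun ξ => ?_)
    have hq : (ζ - (a (l • ξ) ^ m : ℝ))⁻¹ =
        ((l ^ m : ℝ) : ℂ)⁻¹ * (ζ / (l ^ m : ℝ) - (a ξ ^ m : ℝ))⁻¹ := by
      have hne : ((l ^ m : ℝ) : ℂ) ≠ 0 := by exact_mod_cast hlm0.ne'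
      rw [hhom l hl, mul_rpow hl.le (ha0 ξ), ← mul_inv, mul_sub, mul_div_cancel₀ _ hne, ofReal_mul]
    have hn : ((l ^ dim : ℝ) : ℂ) ≠ 0 := by exact_mod_cast (by positivity : l ^ dim ≠ 0)
    simp only [fourier_schwartzDilation hl, hq, real_smul, map_mul, conj_ofReal, hK, mul_inv,
      ofReal_mul, ofReal_inv]
    field_simp
  have hb := hbound (ζ / (l ^ m : ℝ)) (by
      rw [Complex.div_ofReal_im]; exact div_ne_zero hζ hlm0.ne') (by
      rw [norm_div, Complex.norm_real, Real.norm_of_nonneg hlm0.le, hlm, div_self hζ0.ne'])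
    (schwartzDilation hl.ne' f) (schwartzDilation hl.ne' g)
  rw [lintegral_norm_rpow_mul_schwartzDilation hl, lintegral_norm_rpow_mul_schwartzDilation hl] at hb
  rw [hscale, enorm_smul, mul_pow]
  refine (mul_le_mul_right hb _).trans (le_of_eq ?_)
  have hKe : ‖K‖ₑ * ENNReal.ofReal (l ^ dim * l ^ m) = 1 := by
    rw [Real.enorm_of_nonneg (by positivity), ← ENNReal.ofReal_mul (by positivity), hK,
      inv_mul_cancel₀ (by positivity), ENNReal.ofReal_one]
  calc _ = C * (((‖K‖ₑ * ENNReal.ofReal (l ^ dim * l ^ m)) *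
          ∫⁻ x, ENNReal.ofReal (‖x‖ ^ m) * ‖f x‖ₑ ^ 2) *
        ((‖K‖ₑ * ENNReal.ofReal (l ^ dim * l ^ m)) *
          ∫⁻ x, ENNReal.ofReal (‖x‖ ^ m) * ‖g x‖ₑ ^ 2)) := by ring
    _ = _ := by rw [hKe, one_mul, one_mul]

end Dilation

section Euclidean
open SchwartzMap FourierTransform
open scoped ENNReal

variable {n : ℕ}
local notation "E" => EuclideanSpace ℝ (Fin n)

theorem FT_eq_fourier (f : 𝓢(E, ℂ)) (ξ : E) :
    FT n f ξ = ((2 * π) ^ (-(n : ℝ) / 2) : ℝ) • 𝓕 f ((2 * π)⁻¹ • ξ) := by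
  rw [FT, fourier_coe, Real.fourier_eq']
  congr 1
  refine integral_congr_ae (ae_of_all _ fun x => ?_)
  simp only [inner_smul_right, smul_eq_mul]
  congr 2
  rw [show -2 * π * ((2 * π)⁻¹ * ⟪x, ξ⟫) = -⟪x, ξ⟫ by field_simp]
  push_cast
  ring

theorem conj_FT (g : E → ℂ) (ξ : E) :
    (starRingEnd ℂ) (FT n g ξ) = ((2 * π) ^ (-(n : ℝ) / 2) : ℝ) •
      ∫ x, Complex.exp (Complex.I * ((⟪x, ξ⟫ : ℝ) : ℂ)) * (starRingEnd ℂ) (g x) := by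
  rw [FT, real_smul, map_mul, conj_ofReal, ← integral_conj, real_smul]
  congr 2 with x
  rw [map_mul, ← Complex.exp_conj]
  simp

theorem integrable_FT (f : 𝓢(E, ℂ)) : Integrable (FT n f) := by
  rw [show FT n f = _ from funext (FT_eq_fourier f)]
  exact Integrable.fun_smul _ ((𝓕 f).integrable.comp_smul (R := (2 * π)⁻¹) (by positivity))

/-- Parseval's identity for Fourier multipliers with a bounded measurable symbol. -/
theorem integral_mult_mul_conj {q : E → ℂ} (hq : Measurable q) {B : ℝ} (hB : ∀ ξ, ‖q ξ‖ ≤ B)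
    (f g : 𝓢(E, ℂ)) :
    ∫ x, mult n q f x * (starRingEnd ℂ) (g x) =
      ∫ ξ, q ξ * (FT n f ξ * (starRingEnd ℂ) (FT n g ξ)) := by
  set c : ℝ := (2 * π) ^ (-(n : ℝ) / 2) with hc
  have hF : Integrable fun ξ => q ξ * FT n f ξ :=
    (integrable_FT f).bdd_mul hq.aestronglyMeasurable (ae_of_all _ hB)
  have hG : Integrable fun x => (starRingEnd ℂ) (g x) :=
    g.integrable.congr' (g := fun x => (starRingEnd ℂ) (g x))
      (Complex.continuous_conj.comp g.continuous).aestronglyMeasurable (ae_of_all _ fun x => by simp)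
  have hInt : Integrable (Function.uncurry fun x ξ : E =>
      Complex.exp (Complex.I * ((⟪x, ξ⟫ : ℝ) : ℂ)) *
        ((starRingEnd ℂ) (g x) * (q ξ * FT n f ξ))) (volume.prod volume) := by
    refine (hG.mul_prod hF).bdd_mul (c := 1) ?_ (ae_of_all _ fun p => ?_)
    · exact Continuous.aestronglyMeasurable (by fun_prop)
    · rw [mul_comm, Complex.norm_exp_ofReal_mul_I]
  calc ∫ x, mult n q f x * (starRingEnd ℂ) (g x)
      = ∫ x, ∫ ξ, c • (Complex.exp (Complex.I * ((⟪x, ξ⟫ : ℝ) : ℂ)) *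
          ((starRingEnd ℂ) (g x) * (q ξ * FT n f ξ))) := by
        refine integral_congr_ae (ae_of_all _ fun x => ?_)
        simp only [mult, IFT]
        rw [integral_smul, smul_mul_assoc, ← integral_mul_const]
        congr 2 with ξ
        ring
    _ = ∫ ξ, ∫ x, c • (Complex.exp (Complex.I * ((⟪x, ξ⟫ : ℝ) : ℂ)) *
          ((starRingEnd ℂ) (g x) * (q ξ * FT n f ξ))) := integral_integral_swap (hInt.smul c)
    _ = _ := by
        refine integral_congr_ae (ae_of_all _ fun ξ => ?_)
        simp only [conj_FT]
        rw [integral_smul, ← mul_assoc, mul_smul_comm, ← integral_const_mul]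
        congr 2 with x
        ring

/-- The weighted norm with weight `√(1 + ‖x‖²)^(m/2)` dominates the homogeneous one. -/
theorem lintegral_norm_rpow_mul_sq_le {m : ℝ} (hm : 0 ≤ m) (f : E → ℂ) :
    ∫⁻ x, ENNReal.ofReal (‖x‖ ^ m) * ‖f x‖ₑ ^ 2 ≤
      eLpNorm (fun x => ((Real.sqrt (1 + ‖x‖ ^ 2) ^ (m / 2) : ℝ) : ℂ) * f x) 2 volume ^ 2 := by
  rw [eLpNorm_eq_lintegral_rpow_enorm_toReal two_ne_zero ENNReal.ofNat_ne_top,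
    ← ENNReal.rpow_natCast, ← ENNReal.rpow_mul]
  norm_num
  refine lintegral_mono fun x => ?_
  rw [mul_pow]
  refine mul_le_mul_left ?_ _
  rw [← ofReal_norm, ← ENNReal.ofReal_pow (by positivity), Complex.norm_real,
    Real.norm_of_nonneg (by positivity), ← rpow_natCast, ← rpow_mul (by positivity)]
  refine ENNReal.ofReal_le_ofReal ?_
  rw [show m / 2 * ((2 : ℕ) : ℝ) = m by push_cast; ring]
  refine rpow_le_rpow (norm_nonneg x) (Real.le_sqrt_of_sq_le ?_) hm
  linarith

theorem eLpNorm_weight_mul_ne_top (m : ℝ) (f : 𝓢(E, ℂ)) :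
    eLpNorm (fun x => ((Real.sqrt (1 + ‖x‖ ^ 2) ^ (m / 2) : ℝ) : ℂ) * f x) 2 volume ≠ ⊤ := by
  have hw := Function.hasTemperateGrowth_one_add_norm_sq_rpow E (m / 4)
  have h := (smulLeftCLM ℂ (fun x : E => (1 + ‖x‖ ^ 2) ^ (m / 4)) f).memLp 2 volume
  convert h.eLpNorm_ne_top using 2
  ext x
  rw [smulLeftCLM_apply_apply hw, real_smul, sqrt_eq_rpow, ← rpow_mul (by positivity)]
  rw [show 1 / 2 * (m / 2) = m / 4 by ring]

/-- The resolvent form in terms of the unitary normalisation of the Fourier transform. -/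
theorem integral_mul_FT_mul_conj_FT (q : E → ℂ) (f g : 𝓢(E, ℂ)) :
    ∫ ξ, q ξ * (FT n f ξ * (starRingEnd ℂ) (FT n g ξ)) =
      ∫ ξ, q ((2 * π) • ξ) * (𝓕 f ξ * (starRingEnd ℂ) (𝓕 g ξ)) := by
  have hpi : (0 : ℝ) < 2 * π := by positivity
  have h := Measure.integral_comp_smul_of_nonneg (volume : Measure E)
    (fun ξ => q ((2 * π) • ξ) * (𝓕 f ξ * (starRingEnd ℂ) (𝓕 g ξ))) (2 * π)⁻¹
    (hR := by positivity)
  rw [inv_pow, inv_inv, finrank_euclideanSpace_fin, ← inv_smul_eq_iff₀ (by positivity)] at h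
  rw [← h, ← integral_smul]
  refine integral_congr_ae (ae_of_all _ fun ξ => ?_)
  have hc : ((2 * π) ^ (-(n : ℝ) / 2) : ℝ) * ((2 * π) ^ (-(n : ℝ) / 2) : ℝ) =
      ((2 * π) ^ n)⁻¹ := by
    rw [← rpow_add hpi, show -(n : ℝ) / 2 + -(n : ℝ) / 2 = -n by ring, rpow_neg hpi.le,
      rpow_natCast]
  simp only [FT_eq_fourier, smul_inv_smul₀ hpi.ne']
  rw [← hc]
  simp only [real_smul, map_mul, conj_ofReal, ofReal_mul]
  ring

end Euclidean

theorem resolvent_low_frequency (n : ℕ) (hn : 2 ≤ n) (m : ℝ) (hm1 : 1 < m)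
    (hmn : m < n)
    (a : EuclideanSpace ℝ (Fin n) → ℝ)
    (ha_cont : Continuous a)
    (ha_smooth : ContDiffOn ℝ (⊤ : ℕ∞) a {(0 : EuclideanSpace ℝ (Fin n))}ᶜ)
    (ha_hom : ∀ t : ℝ, 0 < t → ∀ ξ, a (t • ξ) = t * a ξ)
    (ha_pos : ∀ ξ : EuclideanSpace ℝ (Fin n), ξ ≠ 0 → 0 < a ξ) :
    ∃ C > 0, ∀ ζ : ℂ, ζ.im ≠ 0 → ∀ f g : SchwartzMap (EuclideanSpace ℝ (Fin n)) ℂ,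
      ‖∫ x : EuclideanSpace ℝ (Fin n),
          mult n (fun ξ => (ζ - ((a ξ ^ m : ℝ) : ℂ))⁻¹) (fun y => f y) x *
            (starRingEnd ℂ) (g x)‖
        ≤ C * (eLpNorm (fun x => ((Real.sqrt (1 + ‖x‖ ^ 2) ^ (m / 2) : ℝ) : ℂ) * f x) 2 volume).toReal *
            (eLpNorm (fun x => ((Real.sqrt (1 + ‖x‖ ^ 2) ^ (m / 2) : ℝ) : ℂ) * g x) 2 volume).toReal := by
  have hm0 : 0 < m := by linarith
  have hpi : (0 : ℝ) < 2 * π := by positivity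
  have : Nontrivial (EuclideanSpace ℝ (Fin n)) :=
    Module.nontrivial_of_finrank_pos (R := ℝ) (by rw [finrank_euclideanSpace_fin]; omega)
  obtain ⟨C, hC, hbound⟩ := exists_resolvent_bound_of_im_ne_zero
    (a := fun ξ : EuclideanSpace ℝ (Fin n) => a ((2 * π) • ξ)) hm1
    (by rwa [finrank_euclideanSpace_fin]) (ha_cont.comp (continuous_const_smul _))
    (fun t ht ξ => by rw [smul_comm, ha_hom t ht])
    (fun ξ hξ => ha_pos _ (smul_ne_zero hpi.ne' hξ))
  refine ⟨Real.sqrt C.toReal + 1, by positivity, fun ζ hζ f g => ?_⟩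
  set F := eLpNorm (fun x => ((Real.sqrt (1 + ‖x‖ ^ 2) ^ (m / 2) : ℝ) : ℂ) * f x) 2 volume with hF
  set G := eLpNorm (fun x => ((Real.sqrt (1 + ‖x‖ ^ 2) ^ (m / 2) : ℝ) : ℂ) * g x) 2 volume with hG
  have hFt : F ≠ ⊤ := eLpNorm_weight_mul_ne_top m f
  have hGt : G ≠ ⊤ := eLpNorm_weight_mul_ne_top m g
  rw [integral_mult_mul_conj (by fun_prop) (fun ξ => norm_inv_sub_ofReal_le hζ _) f g,
    integral_mul_FT_mul_conj_FT]
  have h := (hbound ζ hζ f g).trans (mul_le_mul_right (mul_le_mul'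
    (lintegral_norm_rpow_mul_sq_le hm0.le f) (lintegral_norm_rpow_mul_sq_le hm0.le g)) C)
  rw [← hF, ← hG] at h
  have h' := ENNReal.toReal_mono (by finiteness) h
  rw [ENNReal.toReal_pow, toReal_enorm, ENNReal.toReal_mul, ENNReal.toReal_mul,
    ENNReal.toReal_pow, ENNReal.toReal_pow] at h'
  calc _ ≤ Real.sqrt C.toReal * F.toReal * G.toReal := by
        refine (sq_le_sq₀ (norm_nonneg _) (by positivity)).1 (h'.trans (le_of_eq ?_))
        rw [mul_pow, mul_pow, Real.sq_sqrt ENNReal.toReal_nonneg]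
        ring
    _ ≤ _ := by
        gcongr
        linarith
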